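/- arXiv:2111.01759 — 4 statements merged into one kernel-verified Lean document; each statement's English description precedes it below -/
import Mathlib

section
/- For all positive integers t and ℓ: 2^{tℓ} ≤ Σ_{(k¹,…,k^t) ∈ (ℕ^ℓ)^t} ∏_{i=1}^ℓ 2^{−K_i} ≤ t!·2^{t(ℓ+1)}, where for each tuple (k¹,…,k^t) the quantity K_i denotes the number of distinct level-i indices in P^{k¹} ∪ ⋯ ∪ P^{k^t}. -/
open MeasureTheory
open scoped Classical ENNReal

noncomputable section

namespace EDW

/-- The star-extended domain `[m] ∪ {⋆₀, ⋆₁, …}`: `Sum.inl x` is a base element of `[m]`,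
`Sum.inr t` is the star `⋆_t`. -/
abbrev Dom (m : ℕ) : Type := Sum (Fin m) ℕ

/-- A position (node) of the extended walk: its vertex together with, for every level `i`,
the value `a_i(μ)` that was computed at this position (if assigned). -/
structure Node (m n : ℕ) : Type where
  vtx : Fin n
  tag : ℕ → Option (Dom m)

theorem freshStar_exists {m : ℕ} (C : Finset (Dom m)) :
    ∃ t : ℕ, (Sum.inr t : Dom m) ∉ C := by
  by_contra hc
  push_neg at hc
  have hinj : Function.Injective (fun t : ℕ => (Sum.inr t : Dom m)) := by
    intro a b h
    simpa using h
  have hsub : Set.range (fun t : ℕ => (Sum.inr t : Dom m)) ⊆ ↑C := by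
    rintro x ⟨t, rfl⟩
    exact hc t
  exact Set.infinite_range_of_injective hinj (C.finite_toSet.subset hsub)

/-- The least `t` with `⋆_t ∉ C`. -/
def freshStar {m : ℕ} (C : Finset (Dom m)) : ℕ := Nat.find (freshStar_exists C)

variable {m n : ℕ}

/-- One level of the extended-walk loop; `fuel` bounds the number of remaining loop
iterations, and `sub s'` is the level-`(i-1)` walk started at `s'`. -/
def loopF (a : Fin n → Fin m) (g : ℕ → Dom m → Bool) (r : ℕ → Dom m → Fin n)
    (sub : Fin n → Option (List (Node m n))) (i : ℕ) :
    ℕ → Finset (Dom m) → Bool → Fin n → List (Node m n) → Option (List (Node m n))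
  | 0, _, _, _, _ => none
  | fuel + 1, C, star, sj, acc =>
    match sub sj with
    | none => none
    | some subw =>
      match subw.getLast? with
      | none => none
      | some xnode =>
        let useBase : Prop := star = false ∧ (Sum.inl (a xnode.vtx) : Dom m) ∉ C
        let y : Dom m := if useBase then Sum.inl (a xnode.vtx) else Sum.inr (freshStar C)
        let star' : Bool := if useBase then false else true
        let xnode' : Node m n := ⟨xnode.vtx, fun t => if t = i then some y else xnode.tag t⟩
        let acc' := acc ++ subw.dropLast ++ [xnode']
        if g i y then loopF a g r sub i fuel (insert y C) star' (r i y) acc' else some acc'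

/-- `walkF fuel i s'` computes the extended walk `walk(s', i)`; it returns `none` if the
fuel is insufficient (the true walk is obtained by letting the fuel go to infinity). -/
def walkF (a : Fin n → Fin m) (g : ℕ → Dom m → Bool) (r : ℕ → Dom m → Fin n) :
    ℕ → ℕ → Fin n → Option (List (Node m n))
  | _, 0, s' => some [⟨s', fun _ => none⟩]
  | 0, _ + 1, _ => none
  | fuel + 1, i + 1, s' =>
    loopF a g r (fun sj => walkF a g r fuel i sj) (i + 1) (fuel + 1) ∅ false s' []

/-- The extended walk `walk(s, ℓ)`: `some w` iff the walk terminates, with output `w`. -/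
def extWalk (a : Fin n → Fin m) (g : ℕ → Dom m → Bool) (r : ℕ → Dom m → Fin n)
    (ℓ : ℕ) (s : Fin n) : Option (List (Node m n)) :=
  if h : ∃ fuel, (walkF a g r fuel ℓ s).isSome = true then walkF a g r (Nat.find h) ℓ s
  else none

/-! ### The relaxed extended walk -/

/-- Storage for the recorded sets `C^{i,k¹}`. -/
abbrev Store (m : ℕ) : Type := ℕ → Option (Finset (Dom m))

/-- One level of the relaxed extended-walk loop. `subR k' st s'` is the relaxed recursive
call at level `i - 1` with index parameter `k'` and store `st`; `subU s'` is the last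
vertex of the un-relaxed walk `walk(s', i-1)`.  The extra loop state is: `j`, the number
of level-`i` nodes produced so far; `Crec = C_{min(j, k¹_i)}`; and the store `st`. -/
def rloopF (a : Fin n → Fin m) (g : ℕ → Dom m → Bool) (r : ℕ → Dom m → Fin n)
    (ℓ : ℕ) (k1 k2 : ℕ → ℕ)
    (subR : (ℕ → ℕ) → Store m → Fin n → Option (List (Node m n) × Store m))
    (subU : Fin n → Option (Fin n)) (i : ℕ) (kctx : ℕ → ℕ) :
    ℕ → Finset (Dom m) → Bool → Fin n → List (Node m n) → ℕ → Finset (Dom m) → Store m →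
      Option (List (Node m n) × Store m)
  | 0, _, _, _, _, _, _, _ => none
  | fuel + 1, C, star, sj, acc, j, Crec, st =>
    match subR (fun t => if t = i then j else if i < t then kctx t else 0) st sj with
    | none => none
    | some (subw, st₁) =>
      match subU sj, subw.getLast? with
      | some xv, some lastnd =>
        let useBase : Prop := star = false ∧ (Sum.inl (a xv) : Dom m) ∉ C
        let y : Dom m := if useBase then Sum.inl (a xv) else Sum.inr (freshStar C)
        let star' : Bool := if useBase then false else true
        let lastnd' : Node m n := ⟨lastnd.vtx, fun t => if t = i then some y else lastnd.tag t⟩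
        let acc' := acc ++ subw.dropLast ++ [lastnd']
        if g i y then
          rloopF a g r ℓ k1 k2 subR subU i kctx fuel (insert y C) star' (r i y) acc' (j + 1)
            (if j + 1 ≤ k1 i then insert y C else Crec) st₁
        else
          some (acc',
            if (∀ t, i < t → t ≤ ℓ → kctx t = k1 t) ∧ (∃ t, i < t ∧ t ≤ ℓ ∧ k1 t < k2 t) then
              fun t => if t = i then some Crec else st₁ t
            else st₁)
      | _, _ => none

/-- The relaxed extended walk `walk^{k¹,k²}(s', i, kctx)`, with fuel. -/
def rwalkF (a : Fin n → Fin m) (g : ℕ → Dom m → Bool) (r : ℕ → Dom m → Fin n)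
    (ℓ : ℕ) (k1 k2 : ℕ → ℕ) :
    ℕ → ℕ → (ℕ → ℕ) → Store m → Fin n → Option (List (Node m n) × Store m)
  | _, 0, _, st, s' => some ([⟨s', fun _ => none⟩], st)
  | 0, _ + 1, _, _, _ => none
  | fuel + 1, i + 1, kctx, st, s' =>
    let C₀ : Finset (Dom m) :=
      if (∀ t, i + 1 < t → t ≤ ℓ → kctx t = k2 t) ∧ (∃ t, i + 1 < t ∧ t ≤ ℓ ∧ k1 t < k2 t) ∧
          0 < k2 (i + 1) then (st (i + 1)).getD ∅
      else ∅
    rloopF a g r ℓ k1 k2 (fun k' st' sj => rwalkF a g r ℓ k1 k2 fuel i k' st' sj)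
      (fun sj => ((walkF a g r fuel i sj).bind List.getLast?).map Node.vtx)
      (i + 1) kctx (fuel + 1) C₀ false s' [] 0 C₀ st

/-- The relaxed extended walk `w^{k¹,k²} = walk^{k¹,k²}(s, ℓ, (0,…,0))`:
`some w` iff it terminates, with output `w`. -/
def extRWalk (a : Fin n → Fin m) (g : ℕ → Dom m → Bool) (r : ℕ → Dom m → Fin n)
    (ℓ : ℕ) (k1 k2 : ℕ → ℕ) (s : Fin n) : Option (List (Node m n)) :=
  if h : ∃ fuel, (rwalkF a g r ℓ k1 k2 fuel ℓ (fun _ => 0) (fun _ => none) s).isSome = true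
  then (rwalkF a g r ℓ k1 k2 (Nat.find h) ℓ (fun _ => 0) (fun _ => none) s).map Prod.fst
  else none

/-! ### Positions, levels and the dependency tree -/

/-- The vertex `w_μ` (positions are 1-indexed; `μ = 0` is the root, which has no vertex). -/
def vtxAt (w : List (Node m n)) (μ : ℕ) : Option (Fin n) :=
  if μ = 0 then none else (w[μ - 1]?).map Node.vtx

/-- The value `a_i(μ)`. -/
def tagAt (w : List (Node m n)) (μ i : ℕ) : Option (Dom m) :=
  if μ = 0 then none else (w[μ - 1]?).bind fun nd => nd.tag i

/-- `level(μ)`: the least `i ∈ [1, ℓ]` with `g_i(a_i(μ)) = 1`, and `ℓ + 1` if there is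
none (in particular for the root `0` and for the final position of the walk). -/
def levelOf (ℓ : ℕ) (g : ℕ → Dom m → Bool) (w : List (Node m n)) (μ : ℕ) : ℕ :=
  if h : ∃ i, (1 ≤ i ∧ i ≤ ℓ) ∧ ∃ y, tagAt w μ i = some y ∧ g i y = true then Nat.find h
  else ℓ + 1

/-- `a(μ) = a_{level(μ)}(μ)`. -/
def aAt (ℓ : ℕ) (g : ℕ → Dom m → Bool) (w : List (Node m n)) (μ : ℕ) : Option (Dom m) :=
  tagAt w μ (levelOf ℓ g w μ)

/-- `next(μ) = w_{μ+1}`. -/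
def nextAt (w : List (Node m n)) (μ : ℕ) : Option (Fin n) := vtxAt w (μ + 1)

/-- `ν` lies on the root-to-`μ` path of the dependency tree with level function `lvl`. -/
def OnPath (lvl : ℕ → ℕ) (ν μ : ℕ) : Prop :=
  ν ≤ μ ∧ ∀ ρ, ν < ρ → ρ ≤ μ → lvl ρ ≤ lvl ν

/-- The number of level-`i` nodes on the root-to-`μ` path. -/
def idxAt (lvl : ℕ → ℕ) (μ i : ℕ) : ℕ :=
  ((Finset.range (μ + 1)).filter fun ν => OnPath lvl ν μ ∧ lvl ν = i).card

/-- Node `μ` of the dependency tree (of a walk of length `wlen`) has index `k`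
(only the components `k_i` with `1 ≤ i ≤ ℓ` are relevant). -/
def HasIdx (ℓ : ℕ) (lvl : ℕ → ℕ) (wlen μ : ℕ) (k : ℕ → ℕ) : Prop :=
  μ ≤ wlen ∧ ∀ i, 1 ≤ i → i ≤ ℓ → idxAt lvl μ i = k i

/-- There is a collision between the root-to-`μ₁` path and the root-to-`μ₂` path. -/
def Collision (lvl : ℕ → ℕ) (av : ℕ → Option (Dom m)) (μ₁ μ₂ : ℕ) : Prop :=
  ∃ α β, OnPath lvl α μ₁ ∧ ¬ OnPath lvl α μ₂ ∧ OnPath lvl β μ₂ ∧ ¬ OnPath lvl β μ₁ ∧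
    lvl α = lvl β ∧ av α = av β

/-! ### The pseudorandom hash function and reachability -/

/-- The pseudorandom hash function of the family `H_{ℓ,m,n}` built from `g, r`
(`none` plays the role of `⋆`). -/
def hashOf (ℓ : ℕ) (g : ℕ → Dom m → Bool) (r : ℕ → Dom m → Fin n) (x : Fin m) :
    Option (Fin n) :=
  if h : ∃ i, (1 ≤ i ∧ i ≤ ℓ) ∧ g i (Sum.inl x) = true then some (r (Nat.find h) (Sum.inl x))
  else none

/-- `v ∈ f*_{a,h}(s)`: `v` is reachable from `s` in the digraph `G_{a,h}`. -/
def Reaches (a : Fin n → Fin m) (hsh : Fin m → Option (Fin n)) (s v : Fin n) : Prop :=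
  Relation.ReflTransGen (fun x y => hsh (a x) = some y) s v

/-- The second frequency moment `F₂(a)`. -/
def F2 (a : Fin n → Fin m) : ℕ :=
  ∑ i : Fin n, ∑ j : Fin n, if a i = a j then 1 else 0

/-! ### Index-vector combinatorics -/

/-- Equality of index vectors (only components `1..ℓ` matter). -/
def IdxEq (ℓ : ℕ) (k k' : ℕ → ℕ) : Prop := ∀ t, 1 ≤ t → t ≤ ℓ → k t = k' t

/-- The ordering `k < k'` on index vectors. -/
def IdxLt (ℓ : ℕ) (k k' : ℕ → ℕ) : Prop :=
  ∃ i, 1 ≤ i ∧ i ≤ ℓ ∧ k i < k' i ∧ ∀ t, i < t → t ≤ ℓ → k t = k' t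

/-- `k'` is an ancestor (index) of `k`. -/
def IsAncestorIdx (ℓ : ℕ) (k' k : ℕ → ℕ) : Prop :=
  ¬ IdxEq ℓ k' k ∧ ∃ i, 1 ≤ i ∧ i ≤ ℓ ∧ (∀ t, i < t → t ≤ ℓ → k' t = k t) ∧
    0 < k' i ∧ k' i ≤ k i ∧ ∀ t, 1 ≤ t → t < i → k' t = 0

/-- `k' ∈ P^k`: `k'` is `k` itself or an ancestor of `k`. -/
def InP (ℓ : ℕ) (k' k : ℕ → ℕ) : Prop := IdxEq ℓ k' k ∨ IsAncestorIdx ℓ k' k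

/-- `k'` is a level-`i` index. -/
def IsLevelIdx (ℓ i : ℕ) (k' : ℕ → ℕ) : Prop := 0 < k' i ∧ ∀ t, 1 ≤ t → t < i → k' t = 0

/-- A canonical index vector: zero outside `[1, ℓ]`. -/
def Canon (ℓ : ℕ) (k' : ℕ → ℕ) : Prop := ∀ t, t = 0 ∨ ℓ < t → k' t = 0

/-- `K_i`: the number of distinct level-`i` indices in `⋃_{k ∈ ks} P^k`. -/
def Kcount (ℓ : ℕ) (ks : List (ℕ → ℕ)) (i : ℕ) : ℕ :=
  Set.ncard {k' : ℕ → ℕ | Canon ℓ k' ∧ IsLevelIdx ℓ i k' ∧ ∃ k ∈ ks, InP ℓ k' k}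

/-- The rank (`1`-based) of the level-`i` index `κ` among the level-`i` indices of
`⋃_{k ∈ ks} P^k`, in increasing `<`-order. -/
def rankOf (ℓ : ℕ) (ks : List (ℕ → ℕ)) (i : ℕ) (κ : ℕ → ℕ) : ℕ :=
  Set.ncard {κ' : ℕ → ℕ |
    Canon ℓ κ' ∧ IsLevelIdx ℓ i κ' ∧ (∃ k ∈ ks, InP ℓ κ' k) ∧ IdxLt ℓ κ' κ} + 1

/-- Interpret a vector `k ∈ ℕ^ℓ` as a (canonical) index vector on levels `1..ℓ`. -/
def toIdx (ℓ : ℕ) (k : Fin ℓ → ℕ) : ℕ → ℕ :=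
  fun t => if h : 1 ≤ t ∧ t ≤ ℓ then k ⟨t - 1, by omega⟩ else 0

/-- The truncation `k^{i,j} = (0, …, 0, j, k_{i+1}, …, k_ℓ)`, indexing `μ^k_{i,j}`. -/
def truncIdx (k : ℕ → ℕ) (i j : ℕ) : ℕ → ℕ :=
  fun t => if t = i then j else if i < t then k t else 0

/-! ### The probability space -/

/-- The sample space: the functions `g_i`, `r_i` (on the star-extended domain) together
with the starting vertex `s`. -/
abbrev Sample (m n : ℕ) : Type := (ℕ → Dom m → Bool) × (ℕ → Dom m → Fin n) × Fin n

def gOf (ω : Sample m n) : ℕ → Dom m → Bool := ω.1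

def rOf (ω : Sample m n) : ℕ → Dom m → Fin n := ω.2.1

def sOf (ω : Sample m n) : Fin n := ω.2.2

/-- `P` is an admissible joint distribution of `(g, r, s)`: the starting vertex `s` is
uniform on `[n]`; each `g_i` (resp. `r_i`) is `τ`-wise independent and uniform on the
base domain, with fully independent uniform values on the stars; and all of
`g_1, …, g_ℓ, r_1, …, r_ℓ, s` are mutually independent.  This is expressed by requiring
that every admissible cylinder event has the correct product probability. -/
def GoodMeasure (ℓ τ : ℕ) (P : Measure (Sample m n)) : Prop :=
  ∀ (S T : Finset (ℕ × Dom m)) (vg : ℕ × Dom m → Bool) (vr : ℕ × Dom m → Fin n)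
    (s₀ : Fin n),
    (∀ q ∈ S, 1 ≤ q.1 ∧ q.1 ≤ ℓ) → (∀ q ∈ T, 1 ≤ q.1 ∧ q.1 ≤ ℓ) →
    (∀ i, (S.filter fun q => q.1 = i ∧ q.2.isLeft = true).card ≤ τ) →
    (∀ i, (T.filter fun q => q.1 = i ∧ q.2.isLeft = true).card ≤ τ) →
    P {ω : Sample m n |
        (∀ q ∈ S, gOf ω q.1 q.2 = vg q) ∧ (∀ q ∈ T, rOf ω q.1 q.2 = vr q) ∧ sOf ω = s₀} =
      (2 : ℝ≥0∞)⁻¹ ^ S.card * ((n : ℝ≥0∞))⁻¹ ^ T.card * (n : ℝ≥0∞)⁻¹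

/-! ### Events for the dependency tree -/

/-- The node indexed by `κ` exists in the dependency tree of the extended walk and its
`next`-value is `v`. -/
def NodeP (a : Fin n → Fin m) (ℓ : ℕ) (κ : ℕ → ℕ) (v : Fin n) (ω : Sample m n) : Prop :=
  ∃ w, extWalk a (gOf ω) (rOf ω) ℓ (sOf ω) = some w ∧
    ∃ μ, HasIdx ℓ (levelOf ℓ (gOf ω) w) w.length μ κ ∧ nextAt w μ = some v

/-- The event `F^{k,b}_{I,J}` (for the extended walk). -/
def Fev (a : Fin n → Fin m) (ℓ : ℕ) (k : ℕ → ℕ) (b : ℕ → ℕ → Fin n) (I J : ℕ)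
    (ω : Sample m n) : Prop :=
  (∀ i j, I < i → i ≤ ℓ → 1 ≤ j → j ≤ k i → NodeP a ℓ (truncIdx k i j) (b i j) ω) ∧
  ∀ j, 1 ≤ j → j ≤ J → NodeP a ℓ (truncIdx k I j) (b I j) ω

/-- The event fixing `g_1, …, g_{i-1}` and `r_1, …, r_{i-1}`. -/
def FixEv (i : ℕ) (gf : ℕ → Dom m → Bool) (rf : ℕ → Dom m → Fin n) : Set (Sample m n) :=
  {ω | ∀ t, 1 ≤ t → t < i → gOf ω t = gf t ∧ rOf ω t = rf t}

/-- The node indexed by `κ` exists in the dependency tree of the relaxed extended walk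
`w^{k¹,k²}` and its `next`-value is `v`. -/
def RNodeP (a : Fin n → Fin m) (ℓ : ℕ) (k1 k2 κ : ℕ → ℕ) (v : Fin n) (ω : Sample m n) :
    Prop :=
  ∃ w, extRWalk a (gOf ω) (rOf ω) ℓ k1 k2 (sOf ω) = some w ∧
    ∃ μ, HasIdx ℓ (levelOf ℓ (gOf ω) w) w.length μ κ ∧ nextAt w μ = some v

/-- The event `F^{K,b}_{I,J}` for `K = {k¹, k²}` (for the relaxed extended walk):
for every level `i ∈ [1, ℓ]` and every level-`i` index `κ` of `P^{k¹} ∪ P^{k²}` of rank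
`j`, if `i > I`, or `i = I` and `j ≤ J`, then `μ^K_{i,j}` exists and `next(μ^K_{i,j}) = b_{i,j}`. -/
def FevK (a : Fin n → Fin m) (ℓ : ℕ) (k1 k2 : ℕ → ℕ) (b : ℕ → ℕ → Fin n) (I J : ℕ)
    (ω : Sample m n) : Prop :=
  ∀ i κ, 1 ≤ i → i ≤ ℓ → Canon ℓ κ → IsLevelIdx ℓ i κ → (InP ℓ κ k1 ∨ InP ℓ κ k2) →
    (I < i ∨ (i = I ∧ rankOf ℓ [k1, k2] i κ ≤ J)) →
    RNodeP a ℓ k1 k2 κ (b i (rankOf ℓ [k1, k2] i κ)) ω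


/-! ### Helper material for the counting lemma -/

theorem tsum_pi_prod {α : Type*} (n : ℕ) (g : Fin n → α → ℝ≥0∞) :
    ∑' f : Fin n → α, ∏ i, g i (f i) = ∏ i, ∑' x, g i x := by
  induction n with
  | zero => simp
  | succ n ih =>
    rw [← (Fin.consEquiv (fun _ : Fin (n + 1) => α)).tsum_eq, ENNReal.tsum_prod']
    simp only [Fin.prod_univ_succ, Fin.consEquiv, Equiv.coe_fn_mk, Fin.cons_zero, Fin.cons_succ]
    simp only [ENNReal.tsum_mul_left, ih (fun i => g i.succ), ENNReal.tsum_mul_right]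

/-- The truncation in `Fin` coordinates. -/
def ftr {ℓ : ℕ} (k : Fin ℓ → ℕ) (p : (_ : Fin ℓ) × ℕ) : Fin ℓ → ℕ :=
  fun s => if s < p.1 then 0 else if s = p.1 then p.2 else k s

/-- The nonzero elements of `P^k`. -/
def fA {ℓ : ℕ} (k : Fin ℓ → ℕ) : Finset (Fin ℓ → ℕ) :=
  (Finset.univ.sigma fun i => Finset.Icc 1 (k i)).image (ftr k)

/-- The level-`i` indices in the union. -/
def fL {t ℓ : ℕ} (ks : Fin t → Fin ℓ → ℕ) (i : Fin ℓ) : Finset (Fin ℓ → ℕ) :=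
  Finset.univ.biUnion fun j => (Finset.Icc 1 (ks j i)).image fun x => ftr (ks j) ⟨i, x⟩

/-- All nonzero indices in the union. -/
def fU {t ℓ : ℕ} (ks : Fin t → Fin ℓ → ℕ) : Finset (Fin ℓ → ℕ) :=
  Finset.univ.biUnion fun j => fA (ks j)

theorem toIdx_succ {ℓ : ℕ} (k : Fin ℓ → ℕ) (s : Fin ℓ) : toIdx ℓ k (s.1 + 1) = k s := by
  have := s.2
  simp [toIdx]

theorem toIdx_inj {ℓ : ℕ} : Function.Injective (toIdx ℓ) := by
  intro a b h
  funext s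
  rw [← toIdx_succ a s, h, toIdx_succ]

theorem inP_level_iff {ℓ : ℕ} (k : ℕ → ℕ) (x : ℕ → ℕ) (i : ℕ) (h1 : 1 ≤ i) (h2 : i ≤ ℓ) :
    (IsLevelIdx ℓ i x ∧ InP ℓ x k) ↔
      ((∀ s, i < s → s ≤ ℓ → x s = k s) ∧ 0 < x i ∧ x i ≤ k i ∧ ∀ s, 1 ≤ s → s < i → x s = 0) := by
  constructor
  · rintro ⟨⟨hx, hz⟩, hP⟩
    rcases hP with h | ⟨-, i', h1', h2', ha, hb, hc, hd⟩
    · exact ⟨fun s hs hs' => h s (by omega) hs', hx, (h i h1 h2).le, hz⟩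
    · have : i' = i := by
        rcases lt_trichotomy i' i with h | h | h
        · have := hz i' h1' h; omega
        · exact h
        · have := hd i h1 h; omega
      subst this
      exact ⟨ha, hb, hc, hd⟩
  · rintro ⟨ha, hb, hc, hd⟩
    refine ⟨⟨hb, hd⟩, ?_⟩
    by_cases h : IdxEq ℓ x k
    · exact Or.inl h
    · exact Or.inr ⟨h, i, h1, h2, ha, hb, hc, hd⟩

theorem Kcount_eq {t ℓ : ℕ} (ks : Fin t → Fin ℓ → ℕ) (i : Fin ℓ) :
    Kcount ℓ (List.ofFn fun j => toIdx ℓ (ks j)) (i.1 + 1) = (fL ks i).card := by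
  have hi := i.2
  rw [← Set.ncard_coe_finset, ← Set.ncard_image_of_injective _ toIdx_inj, Kcount]
  congr 1
  ext x
  simp only [Set.mem_setOf_eq, List.mem_ofFn, Set.mem_image, fL, Finset.mem_coe,
    Finset.mem_biUnion, Finset.mem_univ, true_and, Finset.mem_image, Finset.mem_Icc]
  constructor
  · rintro ⟨hc, hl, _, ⟨j, rfl⟩, hP⟩
    obtain ⟨ha, hb, hcc, hd⟩ := (inP_level_iff _ x _ (by omega) (by omega)).1 ⟨hl, hP⟩
    rw [toIdx_succ] at hcc
    refine ⟨_, ⟨j, x (i.1 + 1), ⟨hb, hcc⟩, rfl⟩, ?_⟩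
    funext s
    by_cases hs : 1 ≤ s ∧ s ≤ ℓ
    · obtain ⟨s', rfl⟩ : ∃ s' : Fin ℓ, s = s'.1 + 1 := ⟨⟨s - 1, by omega⟩, by simp; omega⟩
      rw [toIdx_succ]
      simp only [ftr]
      split_ifs with h1 h2
      · exact (hd _ (by omega) (by have : s'.1 < i.1 := h1; omega)).symm
      · rw [h2]
      · rw [ha _ _ (by omega), toIdx_succ]
        have h3 : ¬ s'.1 < i.1 := h1
        have h4 : ¬ s'.1 = i.1 := fun h => h2 (Fin.ext h)
        omega
    · simp only [toIdx, hs, dite_false]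
      exact (hc s (by omega)).symm
  · rintro ⟨_, ⟨j, v, ⟨hv1, hv2⟩, rfl⟩, rfl⟩
    refine ⟨?_, ?_⟩
    · intro s hs
      have : ¬ (1 ≤ s ∧ s ≤ ℓ) := by omega
      simp [toIdx, this]
    · have := (inP_level_iff (ℓ := ℓ) (toIdx ℓ (ks j)) (toIdx ℓ (ftr (ks j) ⟨i, v⟩)) (i.1 + 1)
        (by omega) (by omega)).2 ⟨?_, ?_, ?_, ?_⟩
      · exact ⟨this.1, _, ⟨j, rfl⟩, this.2⟩
      · intro s hs hs'
        obtain ⟨s', rfl⟩ : ∃ s' : Fin ℓ, s = s'.1 + 1 := ⟨⟨s - 1, by omega⟩, by simp; omega⟩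
        rw [toIdx_succ, toIdx_succ]
        have h : i < s' := by show i.1 < s'.1; omega
        simp [ftr, h.not_gt, h.ne']
      · rw [toIdx_succ]; simp [ftr]; omega
      · rw [toIdx_succ, toIdx_succ]; simp [ftr]; omega
      · intro s hs hs'
        obtain ⟨s', rfl⟩ : ∃ s' : Fin ℓ, s = s'.1 + 1 := ⟨⟨s - 1, by omega⟩, by simp; omega⟩
        rw [toIdx_succ]
        have h : s' < i := by show s'.1 < i.1; omega
        simp [ftr, h]

theorem prod_Icc_eq {ℓ : ℕ} (f : ℕ → ℝ≥0∞) :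
    ∏ i ∈ Finset.Icc 1 ℓ, f i = ∏ i : Fin ℓ, f (i.1 + 1) := by
  rw [Fin.prod_univ_eq_prod_range (fun i => f (i + 1)) ℓ, Finset.range_eq_Ico,
    Finset.prod_Ico_add' f 0 ℓ 1]
  rfl

theorem summand_eq {t ℓ : ℕ} (ks : Fin t → Fin ℓ → ℕ) :
    ∏ i ∈ Finset.Icc 1 ℓ,
      ((2 : ℝ≥0∞) ^ Kcount ℓ (List.ofFn fun j => toIdx ℓ (ks j)) i)⁻¹ =
    ∏ i : Fin ℓ, (2⁻¹ : ℝ≥0∞) ^ (fL ks i).card := by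
  rw [prod_Icc_eq]
  refine Finset.prod_congr rfl fun i _ => ?_
  rw [Kcount_eq, ENNReal.inv_pow]

theorem half_pow_anti {a b : ℕ} (h : a ≤ b) : (2⁻¹ : ℝ≥0∞) ^ b ≤ 2⁻¹ ^ a :=
  pow_le_pow_right_of_le_one' (by simp) h

theorem lower_bound (t ℓ : ℕ) :
    (2 : ℝ≥0∞) ^ (t * ℓ) ≤
      ∑' ks : Fin t → Fin ℓ → ℕ, ∏ i : Fin ℓ, (2⁻¹ : ℝ≥0∞) ^ (fL ks i).card := by
  have h : (2 : ℝ≥0∞) ^ (t * ℓ) =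
      ∑' ks : Fin t → Fin ℓ → ℕ, ∏ j : Fin t, ∏ i : Fin ℓ, (2⁻¹ : ℝ≥0∞) ^ (ks j i) := by
    rw [tsum_pi_prod t (fun _ (k : Fin ℓ → ℕ) => ∏ i : Fin ℓ, (2⁻¹ : ℝ≥0∞) ^ (k i)),
      tsum_pi_prod ℓ (fun _ x => (2⁻¹ : ℝ≥0∞) ^ x), ENNReal.tsum_geometric_two]
    simp [← pow_mul, mul_comm]
  rw [h]
  refine ENNReal.tsum_le_tsum fun ks => ?_
  rw [Finset.prod_comm]
  refine Finset.prod_le_prod' fun i _ => ?_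
  rw [Finset.prod_pow_eq_pow_sum]
  refine half_pow_anti ?_
  refine Finset.card_biUnion_le.trans (Finset.sum_le_sum fun j _ => ?_)
  exact Finset.card_image_le.trans (by simp)

/-- One-step factor of the weight. -/
def fg {ℓ : ℕ} (a : Fin ℓ → ℕ) (i s : Fin ℓ) (x : ℕ) : ℝ≥0∞ :=
  if s < i then 2⁻¹ ^ x
  else if s = i then (if a i < x then 2⁻¹ ^ (x - a i) else 0)
  else if x = a s then 1 else 0

/-- The one-step weight. -/
def fw {ℓ : ℕ} (a b : Fin ℓ → ℕ) : ℝ≥0∞ :=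
  (if b = a then 1 else 0) + ∑ i : Fin ℓ, ∏ s : Fin ℓ, fg a i s (b s)

theorem tsum_shift (c : ℕ) :
    ∑' x : ℕ, (if c < x then (2⁻¹ : ℝ≥0∞) ^ (x - c) else 0) = 1 := by
  rw [← ENNReal.summable.sum_add_tsum_nat_add' (k := c + 1)]
  rw [Finset.sum_eq_zero, zero_add]
  · have : ∀ x : ℕ, (if c < x + (c + 1) then (2⁻¹ : ℝ≥0∞) ^ (x + (c + 1) - c) else 0)
        = 2⁻¹ ^ (x + 1) := by
      intro x
      rw [if_pos (by omega)]
      congr 1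
      omega
    simp only [this, ENNReal.tsum_geometric_add_one, ENNReal.one_sub_inv_two, inv_inv]
    exact ENNReal.inv_mul_cancel (by simp) (by simp)
  · intro x hx
    rw [Finset.mem_range] at hx
    rw [if_neg (by omega)]

theorem tsum_fg {ℓ : ℕ} (a : Fin ℓ → ℕ) (i s : Fin ℓ) :
    ∑' x, fg a i s x = if s < i then 2 else 1 := by
  unfold fg
  split_ifs with h1 h2
  · exact ENNReal.tsum_geometric_two
  · exact tsum_shift _
  · exact tsum_ite_eq _ _

theorem one_add_sum_pow (ℓ : ℕ) :
    (1 : ℝ≥0∞) + ∑ i : Fin ℓ, 2 ^ (i : ℕ) = 2 ^ ℓ := by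
  rw [Fin.sum_univ_eq_sum_range (fun i => (2 : ℝ≥0∞) ^ i) ℓ]
  induction ℓ with
  | zero => simp
  | succ n ih => rw [Finset.sum_range_succ, ← add_assoc, ih, pow_succ, mul_two]

theorem tsum_fw {ℓ : ℕ} (a : Fin ℓ → ℕ) : ∑' b, fw a b = 2 ^ ℓ := by
  unfold fw
  rw [ENNReal.tsum_add, Summable.tsum_finsetSum (fun _ _ => ENNReal.summable), tsum_ite_eq,
    ← one_add_sum_pow]
  congr 1
  refine Finset.sum_congr rfl fun i _ => ?_
  rw [tsum_pi_prod]
  simp only [tsum_fg]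
  rw [Finset.prod_ite]
  simp only [Finset.prod_const, Finset.prod_const_one, mul_one, one_pow]
  congr 1
  rw [← Fin.card_Iio i]
  congr 1
  ext x
  simp

/-- Weight of a chain. -/
def fF {ℓ : ℕ} : (t : ℕ) → (Fin ℓ → ℕ) → (Fin t → Fin ℓ → ℕ) → ℝ≥0∞
  | 0, _, _ => 1
  | t + 1, a, ks => fw a (ks 0) * fF t (ks 0) (fun j => ks j.succ)

theorem tsum_fF {ℓ : ℕ} (t : ℕ) (a : Fin ℓ → ℕ) :
    ∑' ks, fF t a ks = 2 ^ (ℓ * t) := by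
  induction t generalizing a with
  | zero => simp [fF]
  | succ t ih =>
    rw [← (Fin.consEquiv (fun _ : Fin (t + 1) => Fin ℓ → ℕ)).tsum_eq, ENNReal.tsum_prod']
    simp only [fF, Fin.consEquiv, Equiv.coe_fn_mk, Fin.cons_zero, Fin.cons_succ]
    simp only [ENNReal.tsum_mul_left, ENNReal.tsum_mul_right, ih, tsum_fw]
    rw [mul_add, mul_one, pow_add, mul_comm]

theorem colex_lt {ℓ : ℕ} {a b : Fin ℓ → ℕ} :
    toColex a < toColex b ↔ ∃ i, (∀ s, i < s → a s = b s) ∧ a i < b i := Iff.rfl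

theorem fA_le {ℓ : ℕ} {k x : Fin ℓ → ℕ} (hx : x ∈ fA k) : toColex x ≤ toColex k := by
  simp only [fA, Finset.mem_image, Finset.mem_sigma, Finset.mem_univ, true_and,
    Finset.mem_Icc] at hx
  obtain ⟨⟨i, v⟩, ⟨hv1, hv2⟩, rfl⟩ := hx
  apply Pi.toColex_monotone
  intro s
  simp only [ftr]
  split_ifs with h1 h2
  · exact Nat.zero_le _
  · subst h2; exact hv2
  · exact le_rfl

theorem ftr_inj {ℓ : ℕ} (k : Fin ℓ → ℕ) (p q : (_ : Fin ℓ) × ℕ) (hp : 0 < p.2) (hq : 0 < q.2)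
    (h : ftr k p = ftr k q) : p = q := by
  obtain ⟨i, v⟩ := p
  obtain ⟨j, w⟩ := q
  have h1 := congrFun h i
  have h2 := congrFun h j
  simp only [ftr] at h1 h2 hp hq
  rcases lt_trichotomy i j with hij | hij | hij
  · simp [hij] at h1; omega
  · subst hij; simp at h1; subst h1; rfl
  · simp [hij] at h2; omega

theorem step_bound {ℓ : ℕ} (a b : Fin ℓ → ℕ) (hab : toColex a ≤ toColex b) :
    (2⁻¹ : ℝ≥0∞) ^ ((fA b).filter fun x => toColex a < toColex x).card ≤ fw a b := by
  rcases hab.eq_or_lt with h | h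
  · have : a = b := toColex.injective h
    subst this
    refine (half_pow_anti (Nat.zero_le _)).trans ?_
    simp [fw]
  · obtain ⟨i, hi1, hi2⟩ := colex_lt.1 h
    refine le_trans ?_ (le_add_left (Finset.single_le_sum
      (f := fun i => ∏ s : Fin ℓ, fg a i s (b s)) (fun _ _ => zero_le) (Finset.mem_univ i)))
    let c : Fin ℓ → Finset ℕ := fun s =>
      if s < i then Finset.Icc 1 (b s) else if s = i then Finset.Ioc (a i) (b i) else ∅
    have hfg : ∀ s, fg a i s (b s) = 2⁻¹ ^ (c s).card := by
      intro s
      simp only [fg, c]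
      split_ifs with h1 h2 h3 h4 h5
      · simp
      · simp [h2]
      · exact absurd hi2 (h2 ▸ h3)
      · simp
      · have : s ≠ i := h2
        exact absurd (hi1 s (lt_of_le_of_ne (not_lt.1 h1) (Ne.symm h2))).symm h4
    simp only [hfg]
    rw [Finset.prod_pow_eq_pow_sum, ← Finset.card_sigma]
    refine half_pow_anti ?_
    have hc : ∀ p ∈ Finset.univ.sigma c, p.1 ≤ i ∧ 1 ≤ p.2 ∧ p.2 ≤ b p.1 ∧
        (p.1 = i → a i < p.2) := by
      rintro ⟨s, v⟩ hp
      simp only [Finset.mem_sigma, Finset.mem_univ, true_and, c] at hp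
      split_ifs at hp with h1 h2
      · rw [Finset.mem_Icc] at hp
        exact ⟨h1.le, hp.1, hp.2, fun h => absurd h h1.ne⟩
      · rw [Finset.mem_Ioc] at hp
        subst h2
        exact ⟨le_rfl, by have := hp.1; show 1 ≤ v; omega, hp.2, fun _ => hp.1⟩
      · simp at hp
    refine Finset.card_le_card_of_injOn (ftr b) ?_ ?_
    · intro p hp
      obtain ⟨h1, h2, h3, h4⟩ := hc p hp
      simp only [Finset.coe_filter, Set.mem_setOf_eq]
      refine ⟨Finset.mem_image.2 ⟨p, by simp [h2, h3], rfl⟩, colex_lt.2 ⟨i, ?_, ?_⟩⟩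
      · intro s hs
        have : p.1 < s := h1.trans_lt hs
        simp [ftr, this.not_gt, this.ne', hi1 s hs]
      · simp only [ftr, h1.not_gt, if_false]
        split_ifs with h5
        · exact h4 h5.symm
        · exact hi2
    · intro p hp q hq hpq
      exact ftr_inj b p q (hc p hp).2.1 (hc q hq).2.1 hpq

theorem chain_bound {ℓ : ℕ} (t : ℕ) (a : Fin ℓ → ℕ) (ks : Fin t → Fin ℓ → ℕ)
    (hm : Monotone fun j => toColex (ks j)) (ha : ∀ j, toColex a ≤ toColex (ks j)) :
    (2⁻¹ : ℝ≥0∞) ^ ((fU ks).filter fun x => toColex a < toColex x).card ≤ fF t a ks := by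
  induction t generalizing a with
  | zero => simp [fF, fU]
  | succ t ih =>
    have h1 := ih (ks 0) (fun j => ks j.succ) (fun i j hij => hm (Fin.succ_le_succ_iff.2 hij))
      (fun j => hm (Fin.zero_le _))
    refine le_trans ?_ (mul_le_mul' (step_bound a (ks 0) (ha 0)) h1)
    rw [← pow_add]
    refine half_pow_anti ?_
    rw [← Finset.card_union_of_disjoint]
    · refine Finset.card_le_card fun x hx => ?_
      simp only [Finset.mem_union, Finset.mem_filter, fU, Finset.mem_biUnion, Finset.mem_univ,
        true_and] at hx ⊢
      rcases hx with ⟨hx, hx'⟩ | ⟨⟨j, hj⟩, hx'⟩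
      · exact ⟨⟨0, hx⟩, hx'⟩
      · exact ⟨⟨j.succ, hj⟩, (ha 0).trans_lt hx'⟩
    · rw [Finset.disjoint_left]
      intro x hx hx'
      exact absurd (Finset.mem_filter.1 hx').2 (fA_le (Finset.mem_filter.1 hx).1).not_gt

theorem fU_card_le {t ℓ : ℕ} (ks : Fin t → Fin ℓ → ℕ) :
    (fU ks).card ≤ ∑ i, (fL ks i).card := by
  refine le_trans (Finset.card_le_card ?_) Finset.card_biUnion_le
  intro x hx
  simp only [fU, fA, fL, Finset.mem_biUnion, Finset.mem_univ, true_and, Finset.mem_image,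
    Finset.mem_sigma] at hx ⊢
  obtain ⟨j, ⟨i, v⟩, hp, rfl⟩ := hx
  exact ⟨i, j, v, hp, rfl⟩

theorem fU_perm {t ℓ : ℕ} (ks : Fin t → Fin ℓ → ℕ) (σ : Equiv.Perm (Fin t)) :
    fU (fun j => ks (σ j)) = fU ks := by
  ext x
  simp only [fU, Finset.mem_biUnion, Finset.mem_univ, true_and]
  exact σ.exists_congr_left.trans (by simp)

theorem upper_bound (t ℓ : ℕ) :
    ∑' ks : Fin t → Fin ℓ → ℕ, ∏ i : Fin ℓ, (2⁻¹ : ℝ≥0∞) ^ (fL ks i).card ≤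
      (t.factorial : ℝ≥0∞) * 2 ^ (ℓ * t) := by
  have key : ∀ ks : Fin t → Fin ℓ → ℕ, ∏ i : Fin ℓ, (2⁻¹ : ℝ≥0∞) ^ (fL ks i).card ≤
      ∑ σ : Equiv.Perm (Fin t), fF t 0 (fun j => ks (σ j)) := by
    intro ks
    let τ : Equiv.Perm (Fin t) := Tuple.sort fun j => toColex (ks j)
    refine le_trans ?_ (Finset.single_le_sum
      (f := fun σ : Equiv.Perm (Fin t) => fF t 0 (fun j => ks (σ j)))
      (fun _ _ => zero_le) (Finset.mem_univ τ))
    refine le_trans ?_ (chain_bound t 0 (fun j => ks (τ j))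
      (Tuple.monotone_sort fun j => toColex (ks j))
      (fun j => Pi.toColex_monotone (fun _ => Nat.zero_le _)))
    rw [Finset.prod_pow_eq_pow_sum]
    refine half_pow_anti ((Finset.card_filter_le _ _).trans ?_)
    rw [fU_perm]
    exact fU_card_le ks
  refine (ENNReal.tsum_le_tsum key).trans ?_
  rw [Summable.tsum_finsetSum (fun _ _ => ENNReal.summable)]
  have : ∀ σ : Equiv.Perm (Fin t),
      ∑' ks : Fin t → Fin ℓ → ℕ, fF t 0 (fun j => ks (σ j)) = 2 ^ (ℓ * t) := by
    intro σ
    rw [← tsum_fF t (0 : Fin ℓ → ℕ)]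
    exact (Equiv.arrowCongr σ.symm (Equiv.refl (Fin ℓ → ℕ))).tsum_eq (fF t 0)
  simp [this, Fintype.card_perm]

/-- Lemma 5.18: counting lemma for unions of `t` root-to-node paths. -/
theorem statement_9 (t ℓ : ℕ) (ht : 0 < t) (hℓ : 0 < ℓ) :
    (2 : ℝ≥0∞) ^ (t * ℓ) ≤
        (∑' ks : Fin t → Fin ℓ → ℕ,
          ∏ i ∈ Finset.Icc 1 ℓ,
            ((2 : ℝ≥0∞) ^ Kcount ℓ (List.ofFn fun j => toIdx ℓ (ks j)) i)⁻¹) ∧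
      (∑' ks : Fin t → Fin ℓ → ℕ,
          ∏ i ∈ Finset.Icc 1 ℓ,
            ((2 : ℝ≥0∞) ^ Kcount ℓ (List.ofFn fun j => toIdx ℓ (ks j)) i)⁻¹) ≤
        (t.factorial : ℝ≥0∞) * 2 ^ (t * (ℓ + 1)) := by
  simp only [summand_eq]
  refine ⟨lower_bound t ℓ, (upper_bound t ℓ).trans ?_⟩
  refine mul_le_mul_right ?_ _
  exact pow_le_pow_right₀ (by norm_num) (by rw [mul_comm, mul_add]; omega)

end EDW
end
end

section
/- Fix any outcome (w, T) of the extended walk and its dependency tree. Suppose T contains two nodes ᾱ ≠ β̄ with a_{w_ᾱ} = a_{w_β̄}. Then for every node φ ∈ {1,…,|w|} of T, there exist nodes α and β of T such that α ≠ β, a_{w_α} = a_{w_β}, and for any two of the three paths p(φ − 1), p(α − 1), p(β − 1) there is no collision between them. -/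
open MeasureTheory
open scoped Classical ENNReal

noncomputable section

namespace EDW

variable {m n : ℕ}

/-! ### Combinatorial part -/

/-- `Fr ρ`: on the path of `ρ` there are two nodes of the same level forming a `Dup`. -/
def FrP (lvl : ℕ → ℕ) (Dup : ℕ → ℕ → Prop) (ρ : ℕ) : Prop :=
  ∃ ν κ, 1 ≤ ν ∧ ν < κ ∧ OnPath lvl ν ρ ∧ OnPath lvl κ ρ ∧ lvl ν = lvl ρ ∧ lvl κ = lvl ρ ∧ Dup ν κ

theorem onPath_trans {lvl : ℕ → ℕ} {x y z : ℕ} (h1 : OnPath lvl x y) (h2 : OnPath lvl y z) :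
    OnPath lvl x z := by
  refine ⟨h1.1.trans h2.1, fun ρ h h' => ?_⟩
  rcases le_or_gt ρ y with hy | hy
  · exact h1.2 ρ h hy
  · have e1 := h2.2 ρ hy h'
    rcases h1.1.eq_or_lt with e | e
    · subst e; exact e1
    · exact e1.trans (h1.2 y e le_rfl)

theorem onPath_pred {lvl : ℕ → ℕ} {x y z : ℕ} (hy : 1 ≤ y) (h1 : OnPath lvl x (y - 1))
    (hl : lvl y ≤ lvl x) (h2 : OnPath lvl y z) : OnPath lvl x z := by
  refine onPath_trans (y := y) ⟨by have := h1.1; omega, fun ρ h h' => ?_⟩ h2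
  rcases h'.eq_or_lt with e | e
  · subst e; exact hl
  · exact h1.2 ρ h (by omega)

theorem measure_lt (lvl : ℕ → ℕ) (N : ℕ) (S S' : Finset ℕ) (hS' : S' ⊆ Finset.range N) (γ : ℕ)
    (h1 : 1 ≤ lvl γ) (hγ : γ ∈ S) (hγ' : γ ∉ S') (h : ∀ ν ∈ S', lvl γ ≤ lvl ν → ν ∈ S) :
    ∑ ν ∈ S', (N + 1) ^ lvl ν < ∑ ν ∈ S, (N + 1) ^ lvl ν := by
  rw [← Finset.sum_filter_add_sum_filter_not S' (fun ν => lvl γ ≤ lvl ν),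
    ← Finset.add_sum_erase S _ hγ]
  have e1 : ∑ ν ∈ S' with lvl γ ≤ lvl ν, (N + 1) ^ lvl ν ≤ ∑ ν ∈ S.erase γ, (N + 1) ^ lvl ν := by
    apply Finset.sum_le_sum_of_subset
    intro ν hν
    rw [Finset.mem_filter] at hν
    rw [Finset.mem_erase]
    refine ⟨?_, h ν hν.1 hν.2⟩
    rintro rfl
    exact hγ' hν.1
  have e2 : ∑ ν ∈ S' with ¬ lvl γ ≤ lvl ν, (N + 1) ^ lvl ν ≤ N * (N + 1) ^ (lvl γ - 1) := by
    have e3 : (S'.filter fun ν => ¬ lvl γ ≤ lvl ν).card ≤ N := by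
      calc _ ≤ S'.card := Finset.card_filter_le _ _
        _ ≤ (Finset.range N).card := Finset.card_le_card hS'
        _ = N := Finset.card_range N
    calc _ ≤ (S'.filter fun ν => ¬ lvl γ ≤ lvl ν).card • (N + 1) ^ (lvl γ - 1) := by
            apply Finset.sum_le_card_nsmul
            intro ν hν
            rw [Finset.mem_filter] at hν
            exact Nat.pow_le_pow_right (by omega) (by omega)
      _ ≤ _ := by rw [smul_eq_mul]; exact Nat.mul_le_mul_right _ e3
  have e4 : (N + 1) ^ lvl γ = N * (N + 1) ^ (lvl γ - 1) + (N + 1) ^ (lvl γ - 1) := by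
    obtain ⟨k, hk⟩ : ∃ k, lvl γ = k + 1 := ⟨lvl γ - 1, by omega⟩
    rw [hk, Nat.add_sub_cancel]; ring
  have e5 : 0 < (N + 1) ^ (lvl γ - 1) := by positivity
  omega

theorem comb {m : ℕ} (lvl : ℕ → ℕ) (av : ℕ → Option (Dom m)) (N : ℕ) (Dup : ℕ → ℕ → Prop)
    (h1 : ∀ μ, 1 ≤ lvl μ) (h0 : ∀ μ, lvl μ ≤ lvl 0)
    (hc : ∀ γ δ, 1 ≤ γ → γ < N → 1 ≤ δ → δ < N → γ ≠ δ → lvl γ = lvl δ → av γ = av δ →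
      Dup γ δ ∨ (FrP lvl Dup γ ∧ FrP lvl Dup δ))
    (φ : ℕ) (hφ : 1 ≤ φ) (hφN : φ ≤ N) :
    ∀ (M α β : ℕ), 1 ≤ α → α ≤ N → 1 ≤ β → β ≤ N → α ≠ β → Dup α β →
      ∑ ν ∈ (Finset.range N).filter (fun ν => OnPath lvl ν (φ - 1) ∨ OnPath lvl ν (α - 1) ∨
        OnPath lvl ν (β - 1)), (N + 1) ^ lvl ν = M →
      ∃ α β, 1 ≤ α ∧ α ≤ N ∧ 1 ≤ β ∧ β ≤ N ∧ α ≠ β ∧ Dup α β ∧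
        ¬ Collision lvl av (φ - 1) (α - 1) ∧ ¬ Collision lvl av (φ - 1) (β - 1) ∧
        ¬ Collision lvl av (α - 1) (β - 1) := by
  intro M
  induction M using Nat.strong_induction_on with
  | _ M ih =>
  intro α β hα hαN hβ hβN hne hdup hM
  by_contra hcon
  have root : ∀ P, OnPath lvl 0 P := fun P => ⟨Nat.zero_le _, fun ρ _ _ => h0 ρ⟩
  -- replacement by a new pair
  have rep : ∀ γ x y, γ < N → (OnPath lvl γ (φ - 1) ∨ OnPath lvl γ (α - 1) ∨
        OnPath lvl γ (β - 1)) → ¬ OnPath lvl γ (φ - 1) → ¬ OnPath lvl γ (x - 1) →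
      ¬ OnPath lvl γ (y - 1) → 1 ≤ x → x ≤ N → 1 ≤ y → y ≤ N → x ≠ y → Dup x y →
      (∀ ν, lvl γ ≤ lvl ν → OnPath lvl ν (x - 1) → (OnPath lvl ν (φ - 1) ∨
        OnPath lvl ν (α - 1) ∨ OnPath lvl ν (β - 1))) →
      (∀ ν, lvl γ ≤ lvl ν → OnPath lvl ν (y - 1) → (OnPath lvl ν (φ - 1) ∨
        OnPath lvl ν (α - 1) ∨ OnPath lvl ν (β - 1))) → False := by
    intro γ x y hγN hγ n1 n2 n3 hx hxN hy hyN hxy hd kx ky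
    refine hcon (ih _ ?_ x y hx hxN hy hyN hxy hd rfl)
    rw [← hM]
    apply measure_lt lvl N _ _ (Finset.filter_subset _ _) γ (h1 γ)
    · rw [Finset.mem_filter, Finset.mem_range]; exact ⟨hγN, hγ⟩
    · rw [Finset.mem_filter]; tauto
    · intro ν hν hl
      rw [Finset.mem_filter] at hν ⊢
      refine ⟨hν.1, ?_⟩
      rcases hν.2 with h | h | h
      · exact Or.inl h
      · exact kx ν hl h
      · exact ky ν hl h
  -- descent from a collision
  have key : ∀ P Q γ δ, P < N → Q < N →
      (∀ ν, OnPath lvl ν P → (OnPath lvl ν (φ - 1) ∨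
        OnPath lvl ν (α - 1) ∨ OnPath lvl ν (β - 1))) →
      (∀ ν, OnPath lvl ν Q → (OnPath lvl ν (φ - 1) ∨
        OnPath lvl ν (α - 1) ∨ OnPath lvl ν (β - 1))) →
      OnPath lvl γ P → ¬ OnPath lvl γ Q → OnPath lvl δ Q → ¬ OnPath lvl δ P →
      lvl γ = lvl δ → av γ = av δ → ¬ OnPath lvl γ (φ - 1) → False := by
    intro P Q γ δ hP hQ kP kQ hγP hγQ hδQ hδP hl ha hn
    have hγ1 : 1 ≤ γ := by
      rcases Nat.eq_zero_or_pos γ with h | h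
      · subst h; exact absurd (root _) hγQ
      · exact h
    have hδ1 : 1 ≤ δ := by
      rcases Nat.eq_zero_or_pos δ with h | h
      · subst h; exact absurd (root _) hδP
      · exact h
    have hγN : γ < N := lt_of_le_of_lt hγP.1 hP
    have hδN : δ < N := lt_of_le_of_lt hδQ.1 hQ
    have hγδ : γ ≠ δ := by rintro rfl; exact hγQ hδQ
    rcases hc γ δ hγ1 hγN hδ1 hδN hγδ hl ha with hd | ⟨hs, _⟩
    · refine rep γ γ δ hγN (kP _ hγP) hn ?_ ?_ hγ1 hγN.le hδ1 hδN.le hγδ hd ?_ ?_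
      · intro h; have := h.1; omega
      · intro h; exact hγQ (onPath_pred hδ1 h hl.ge hδQ)
      · intro ν hν h; exact kP _ (onPath_pred hγ1 h hν hγP)
      · intro ν hν h; exact kQ _ (onPath_pred hδ1 h (hl ▸ hν) hδQ)
    · obtain ⟨ν, κ, hν1, hνκ, hν, hκ, lν, lκ, hd⟩ := hs
      have b1 := hν.1
      have b2 := hκ.1
      refine rep γ ν κ hγN (kP _ hγP) hn ?_ ?_ hν1 (by omega) (by omega) (by omega) (by omega)
        hd ?_ ?_
      · intro h; have := h.1; omega
      · intro h; have := h.1; omega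
      · intro ρ hρ h; exact kP _ (onPath_pred hν1 h (lν ▸ hρ) (onPath_trans hν hγP))
      · intro ρ hρ h; exact kP _ (onPath_pred (by omega) h (lκ ▸ hρ) (onPath_trans hκ hγP))
  apply hcon
  refine ⟨α, β, hα, hαN, hβ, hβN, hne, hdup, ?_, ?_, ?_⟩
  · rintro ⟨δ, γ, c1, c2, c3, c4, c5, c6⟩
    exact key (α - 1) (φ - 1) γ δ (by omega) (by omega) (by tauto) (by tauto) c3 c4 c1 c2
      c5.symm c6.symm c4
  · rintro ⟨δ, γ, c1, c2, c3, c4, c5, c6⟩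
    exact key (β - 1) (φ - 1) γ δ (by omega) (by omega) (by tauto) (by tauto) c3 c4 c1 c2
      c5.symm c6.symm c4
  · rintro ⟨δ, γ, c1, c2, c3, c4, c5, c6⟩
    by_cases hδ : OnPath lvl δ (φ - 1)
    · by_cases hγ : OnPath lvl γ (φ - 1)
      · rcases le_total δ γ with h | h
        · apply c2
          exact onPath_trans (y := γ) ⟨h, fun ρ e e' => hδ.2 ρ e (e'.trans hγ.1)⟩ c3
        · apply c4
          exact onPath_trans (y := δ) ⟨h, fun ρ e e' => hγ.2 ρ e (e'.trans hδ.1)⟩ c1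
      · exact key (β - 1) (α - 1) γ δ (by omega) (by omega) (by tauto) (by tauto) c3 c4 c1 c2
          c5.symm c6.symm hγ
    · exact key (α - 1) (β - 1) δ γ (by omega) (by omega) (by tauto) (by tauto) c1 c2 c3 c4
        c5 c6 hδ

/-! ### Structure of the walk -/

/-- `i` is the least level at which the node continues. -/
def IsLev (g : ℕ → Dom m → Bool) (nd : Node m n) (i : ℕ) : Prop :=
  1 ≤ i ∧ (∃ y, nd.tag i = some y ∧ g i y = true) ∧
    ∀ t, 1 ≤ t → t < i → ∀ y, nd.tag t = some y → g t y = false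

def BaseOK (a : Fin n → Fin m) (g : ℕ → Dom m → Bool) (l : List (Node m n)) : Prop :=
  ∀ nd ∈ l, ∀ i x, IsLev g nd i → nd.tag i = some (Sum.inl x) → a nd.vtx = x

def StarOK (a : Fin n → Fin m) (g : ℕ → Dom m → Bool) (l : List (Node m n)) : Prop :=
  ∀ (p : ℕ) (nd : Node m n) (i t : ℕ), l[p]? = some nd → IsLev g nd i → nd.tag i = some (Sum.inr t) →
    ∃ (q q' : ℕ) (nq nq' : Node m n), q < q' ∧ q' ≤ p ∧ l[q]? = some nq ∧ l[q']? = some nq' ∧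
      IsLev g nq i ∧ IsLev g nq' i ∧ a nq.vtx = a nq'.vtx ∧
      ∀ (k : ℕ) (nk : Node m n), q ≤ k → k ≤ p → l[k]? = some nk → ∃ j ≤ i, IsLev g nk j

def LevLe (g : ℕ → Dom m → Bool) (i : ℕ) (l : List (Node m n)) : Prop :=
  ∀ nd ∈ l, ∃ j ≤ i, IsLev g nd j

def Stopped (g : ℕ → Dom m → Bool) (i : ℕ) (nd : Node m n) : Prop :=
  ∀ t, 1 ≤ t → t ≤ i → ∀ y, nd.tag t = some y → g t y = false

def WalkOK (a : Fin n → Fin m) (g : ℕ → Dom m → Bool) (i : ℕ) (l : List (Node m n)) : Prop :=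
  ∃ l0 nd, l = l0 ++ [nd] ∧ LevLe g i l0 ∧ BaseOK a g l0 ∧ StarOK a g l0 ∧ Stopped g i nd

theorem isLev_unique {g : ℕ → Dom m → Bool} {nd : Node m n} {i j : ℕ} (hi : IsLev g nd i)
    (hj : IsLev g nd j) : i = j := by
  obtain ⟨i1, ⟨y, hy, gy⟩, hi⟩ := hi
  obtain ⟨j1, ⟨z, hz, gz⟩, hj⟩ := hj
  rcases lt_trichotomy i j with h | h | h
  · have := hj i i1 h y hy; simp_all
  · exact h
  · have := hi j j1 h z hz; simp_all

theorem baseOK_append {a : Fin n → Fin m} {g : ℕ → Dom m → Bool} {l l' : List (Node m n)}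
    (h : BaseOK a g l) (h' : BaseOK a g l') : BaseOK a g (l ++ l') := by
  intro nd hnd
  rcases List.mem_append.1 hnd with h1 | h1
  · exact h nd h1
  · exact h' nd h1

theorem levLe_append {g : ℕ → Dom m → Bool} {i : ℕ} {l l' : List (Node m n)}
    (h : LevLe g i l) (h' : LevLe g i l') : LevLe g i (l ++ l') := by
  intro nd hnd
  rcases List.mem_append.1 hnd with h1 | h1
  · exact h nd h1
  · exact h' nd h1

theorem starOK_append {a : Fin n → Fin m} {g : ℕ → Dom m → Bool} {l l' : List (Node m n)}
    (h : StarOK a g l) (h' : StarOK a g l') : StarOK a g (l ++ l') := by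
  intro p nd i t hp hl ht
  rcases lt_or_ge p l.length with hlt | hge
  · rw [List.getElem?_append_left hlt] at hp
    obtain ⟨q, q', nq, nq', c1, c2, c3, c4, c5, c6, c7, c8⟩ := h p nd i t hp hl ht
    refine ⟨q, q', nq, nq', c1, c2, ?_, ?_, c5, c6, c7, ?_⟩
    · rwa [List.getElem?_append_left (by omega)]
    · rwa [List.getElem?_append_left (by omega)]
    · intro k nk e1 e2 e3
      rw [List.getElem?_append_left (by omega)] at e3
      exact c8 k nk e1 e2 e3
  · rw [List.getElem?_append_right hge] at hp
    obtain ⟨q, q', nq, nq', c1, c2, c3, c4, c5, c6, c7, c8⟩ := h' _ nd i t hp hl ht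
    refine ⟨l.length + q, l.length + q', nq, nq', by omega, by omega, ?_, ?_, c5, c6, c7, ?_⟩
    · rw [List.getElem?_append_right (by omega), Nat.add_sub_cancel_left]; exact c3
    · rw [List.getElem?_append_right (by omega), Nat.add_sub_cancel_left]; exact c4
    · intro k nk e1 e2 e3
      rw [List.getElem?_append_right (by omega)] at e3
      exact c8 (k - l.length) nk (by omega) (by omega) e3

/-- Loop invariant linking `C` and `star` to the accumulated nodes. -/
def LoopInv (a : Fin n → Fin m) (g : ℕ → Dom m → Bool) (i : ℕ) (C : Finset (Dom m))
    (star : Bool) (acc : List (Node m n)) : Prop :=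
  (∀ x, (Sum.inl x : Dom m) ∈ C →
    ∃ (q : ℕ) (nq : Node m n), acc[q]? = some nq ∧ IsLev g nq i ∧ a nq.vtx = x) ∧
  (star = true → ∃ (q q' : ℕ) (nq nq' : Node m n), q < q' ∧ acc[q]? = some nq ∧ acc[q']? = some nq' ∧
    IsLev g nq i ∧ IsLev g nq' i ∧ a nq.vtx = a nq'.vtx)

theorem getElem?_app {α : Type*} {l l' : List α} {q : ℕ} {x : α} (h : l[q]? = some x) :
    (l ++ l')[q]? = some x := by
  rw [List.getElem?_append_left (List.getElem?_eq_some_iff.1 h).1]; exact h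

theorem loop_ok (a : Fin n → Fin m) (g : ℕ → Dom m → Bool) (r : ℕ → Dom m → Fin n)
    (sub : Fin n → Option (List (Node m n))) (i : ℕ)
    (hsub : ∀ s l, sub s = some l → WalkOK a g i l) :
    ∀ fuel C star sj acc w, LevLe g (i + 1) acc → BaseOK a g acc → StarOK a g acc →
      LoopInv a g (i + 1) C star acc →
      loopF a g r sub (i + 1) fuel C star sj acc = some w → WalkOK a g (i + 1) w := by
  intro fuel
  induction fuel with
  | zero => intro C star sj acc w _ _ _ _ h; simp [loopF] at h
  | succ fuel ih =>
  intro C star sj acc w hL hB hS hI h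
  rw [loopF] at h
  cases hs : sub sj with
  | none => simp [hs] at h
  | some subw =>
  obtain ⟨l0, nd, rfl, sL, sB, sS, sN⟩ := hsub sj subw hs
  simp only [hs, List.getLast?_append, List.getLast?_singleton, Option.some_or,
    List.dropLast_concat] at h
  set ub : Prop := star = false ∧ (Sum.inl (a nd.vtx) : Dom m) ∉ C with hub
  set y : Dom m := if ub then Sum.inl (a nd.vtx) else Sum.inr (freshStar C) with hy
  set nd' : Node m n := ⟨nd.vtx, fun t => if t = i + 1 then some y else nd.tag t⟩ with hnd'
  have tagy : nd'.tag (i + 1) = some y := by simp [hnd']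
  have taglt : ∀ t, t ≤ i → nd'.tag t = nd.tag t := by
    intro t ht; simp only [hnd']; rw [if_neg (by omega)]
  have L1 : LevLe g (i + 1) (acc ++ l0) :=
    levLe_append hL (fun x hx => by obtain ⟨j, hj, e⟩ := sL x hx; exact ⟨j, by omega, e⟩)
  have B1 : BaseOK a g (acc ++ l0) := baseOK_append hB sB
  have S1 : StarOK a g (acc ++ l0) := starOK_append hS sS
  cases hg : g (i + 1) y with
  | false =>
    simp only [hg, Bool.false_eq_true, if_false, Option.some.injEq] at h
    refine ⟨acc ++ l0, nd', h.symm, L1, B1, S1, ?_⟩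
    intro t t1 t2 z hz
    rcases t2.eq_or_lt with e | e
    · subst e
      rw [tagy] at hz
      cases hz; exact hg
    · rw [taglt t (by omega)] at hz
      exact sN t t1 (by omega) z hz
  | true =>
    simp only [hg, if_true] at h
    have hlev : IsLev g nd' (i + 1) := by
      refine ⟨by omega, ⟨y, tagy, hg⟩, ?_⟩
      intro t t1 t2 z hz
      rw [taglt t (by omega)] at hz
      exact sN t t1 (by omega) z hz
    have L2 : LevLe g (i + 1) (acc ++ l0 ++ [nd']) :=
      levLe_append L1 (by intro x hx; rw [List.mem_singleton] at hx; subst hx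
                          exact ⟨_, le_rfl, hlev⟩)
    have lastget : (acc ++ l0 ++ [nd'])[(acc ++ l0).length]? = some nd' := by
      rw [List.getElem?_concat_length]
    -- the pair witnessing a star
    have pair : ¬ ub → ∃ (q q' : ℕ) (nq nq' : Node m n), q < q' ∧ (acc ++ l0 ++ [nd'])[q]? = some nq ∧
        (acc ++ l0 ++ [nd'])[q']? = some nq' ∧
        IsLev g nq (i + 1) ∧ IsLev g nq' (i + 1) ∧ a nq.vtx = a nq'.vtx := by
      intro hn
      cases hst : star with
      | true =>
        obtain ⟨q, q', nq, nq', c1, c2, c3, c4⟩ := hI.2 hst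
        exact ⟨q, q', nq, nq', c1, getElem?_app (getElem?_app c2),
          getElem?_app (getElem?_app c3), c4⟩
      | false =>
        have hC : (Sum.inl (a nd.vtx) : Dom m) ∈ C := by
          by_contra hC; exact hn ⟨hst, hC⟩
        obtain ⟨q, nq, c1, c2, c3⟩ := hI.1 _ hC
        have hq := (List.getElem?_eq_some_iff.1 c1).1
        exact ⟨q, (acc ++ l0).length, nq, nd', by rw [List.length_append]; omega,
          getElem?_app (getElem?_app c1), lastget, c2, hlev, c3⟩
    refine ih _ _ _ _ _ L2 ?_ ?_ ?_ h
    · refine baseOK_append B1 ?_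
      intro x hx j z hj hz
      rw [List.mem_singleton] at hx; subst hx
      have := isLev_unique hj hlev; subst this
      rw [tagy] at hz
      by_cases hu : ub
      · rw [hy, if_pos hu] at hz
        simpa [hnd'] using hz
      · rw [hy, if_neg hu] at hz; simp at hz
    · intro p x j t hp hj ht
      rcases lt_or_ge p (acc ++ l0).length with hlt | hge
      · rw [List.getElem?_append_left hlt] at hp
        obtain ⟨q, q', nq, nq', c1, c2, c3, c4, c5, c6, c7, c8⟩ := S1 p x j t hp hj ht
        refine ⟨q, q', nq, nq', c1, c2, getElem?_app c3, getElem?_app c4, c5, c6, c7, ?_⟩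
        intro k nk e1 e2 e3
        rw [List.getElem?_append_left (by omega)] at e3
        exact c8 k nk e1 e2 e3
      · have hpl := (List.getElem?_eq_some_iff.1 hp).1
        have hpe : p = (acc ++ l0).length := by
          rw [List.length_append, List.length_singleton] at hpl; omega
        subst hpe
        rw [lastget] at hp
        cases hp
        have := isLev_unique hj hlev; subst this
        rw [tagy] at ht
        have hu : ¬ ub := by
          intro hu; rw [hy, if_pos hu] at ht; simp at ht
        obtain ⟨q, q', nq, nq', c1, c2, c3, c4, c5, c6⟩ := pair hu
        have hpl' := (List.getElem?_eq_some_iff.1 c3).1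
        rw [List.length_append (as := acc ++ l0), List.length_singleton] at hpl'
        refine ⟨q, q', nq, nq', c1, by omega, c2, c3, c4, c5, c6, ?_⟩
        intro k nk _ _ e3
        exact L2 nk (List.mem_of_getElem? e3)
    · refine ⟨?_, ?_⟩
      · intro x hx
        rcases Finset.mem_insert.1 hx with e | e
        · refine ⟨_, nd', lastget, hlev, ?_⟩
          by_cases hu : ub
          · rw [hy, if_pos hu] at e
            simpa [hnd'] using e.symm
          · rw [hy, if_neg hu] at e; simp at e
        · obtain ⟨q, nq, c1, c2⟩ := hI.1 x e
          exact ⟨q, nq, getElem?_app (getElem?_app c1), c2⟩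
      · intro hst
        apply pair
        intro hu
        rw [if_pos hu] at hst
        simp at hst

theorem walk_ok (a : Fin n → Fin m) (g : ℕ → Dom m → Bool) (r : ℕ → Dom m → Fin n) :
    ∀ i fuel s w, walkF a g r fuel i s = some w → WalkOK a g i w := by
  intro i
  induction i with
  | zero =>
    intro fuel s w h
    rw [walkF] at h
    cases h
    refine ⟨[], _, rfl, ?_, ?_, ?_, ?_⟩
    · intro x hx; simp at hx
    · intro x hx; simp at hx
    · intro p nd i t hp; simp at hp
    · intro t t1 t2; omega
  | succ i ih =>
    intro fuel s w h
    cases fuel with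
    | zero => simp [walkF] at h
    | succ fuel =>
      rw [walkF] at h
      refine loop_ok a g r _ i (fun s l hl => ih fuel s l hl) _ _ _ _ _ _ ?_ ?_ ?_ ?_ h
      · intro x hx; simp at hx
      · intro x hx; simp at hx
      · intro p nd i t hp; simp at hp
      · refine ⟨fun x hx => by simp at hx, fun h => by simp at h⟩

theorem levelOf_eq (ℓ : ℕ) (g : ℕ → Dom m → Bool) (w : List (Node m n)) (μ : ℕ) (nd : Node m n)
    (h1 : 1 ≤ μ) (hnd : w[μ - 1]? = some nd) (i : ℕ) (hi : i ≤ ℓ) (hl : IsLev g nd i) :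
    levelOf ℓ g w μ = i := by
  have htag : ∀ t, tagAt w μ t = nd.tag t := by
    intro t; unfold tagAt; rw [if_neg (by omega), hnd]; rfl
  obtain ⟨i1, ⟨y, hy, gy⟩, hlt⟩ := hl
  have hex : ∃ i, (1 ≤ i ∧ i ≤ ℓ) ∧ ∃ y, tagAt w μ i = some y ∧ g i y = true :=
    ⟨i, ⟨i1, hi⟩, y, by rw [htag]; exact hy, gy⟩
  unfold levelOf
  rw [dif_pos hex, Nat.find_eq_iff]
  refine ⟨⟨⟨i1, hi⟩, y, by rw [htag]; exact hy, gy⟩, ?_⟩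
  rintro k hk ⟨⟨k1, _⟩, z, hz, gz⟩
  rw [htag] at hz
  have := hlt k k1 hk z hz
  simp_all

theorem levelOf_bounds (ℓ : ℕ) (g : ℕ → Dom m → Bool) (w : List (Node m n)) (μ : ℕ) :
    1 ≤ levelOf ℓ g w μ ∧ levelOf ℓ g w μ ≤ ℓ + 1 := by
  unfold levelOf
  split_ifs with h
  · have := (Nat.find_spec h).1; omega
  · omega

theorem levelOf_zero (ℓ : ℕ) (g : ℕ → Dom m → Bool) (w : List (Node m n)) :
    levelOf ℓ g w 0 = ℓ + 1 := by
  unfold levelOf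
  rw [dif_neg]
  rintro ⟨i, _, y, hy, _⟩
  simp [tagAt] at hy

/-- Two positions with the same `a`-value. -/
def DupAt (a : Fin n → Fin m) (w : List (Node m n)) (α β : ℕ) : Prop :=
  ∃ x y, vtxAt w α = some x ∧ vtxAt w β = some y ∧ a x = a y

theorem vtxAt_of (w : List (Node m n)) (μ : ℕ) (nd : Node m n)
    (h1 : 1 ≤ μ) (hnd : w[μ - 1]? = some nd) : vtxAt w μ = some nd.vtx := by
  unfold vtxAt; rw [if_neg (by omega), hnd]; rfl

theorem coll_cases (ℓ : ℕ) (a : Fin n → Fin m) (g : ℕ → Dom m → Bool) (w : List (Node m n))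
    (hw : WalkOK a g ℓ w) (γ δ : ℕ) (hγ : 1 ≤ γ) (hγN : γ < w.length) (hδ : 1 ≤ δ)
    (hδN : δ < w.length) (hl : levelOf ℓ g w γ = levelOf ℓ g w δ)
    (ha : aAt ℓ g w γ = aAt ℓ g w δ) :
    DupAt a w γ δ ∨ (FrP (levelOf ℓ g w) (DupAt a w) γ ∧ FrP (levelOf ℓ g w) (DupAt a w) δ) := by
  obtain ⟨l0, nd, rfl, hL, hB, hS, -⟩ := hw
  simp only [List.length_append, List.length_singleton] at hγN hδN
  have get : ∀ μ, 1 ≤ μ → μ < l0.length + 1 → ∃ x ∈ l0, l0[μ - 1]? = some x ∧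
      ∃ j ≤ ℓ, IsLev g x j ∧ levelOf ℓ g (l0 ++ [nd]) μ = j ∧
        aAt ℓ g (l0 ++ [nd]) μ = x.tag j := by
    intro μ h1 h2
    have hx : l0[μ - 1]? = some l0[μ - 1] := List.getElem?_eq_getElem (by omega)
    have hm := List.mem_of_getElem? hx
    obtain ⟨j, hj, hlev⟩ := hL _ hm
    have e := levelOf_eq ℓ g (l0 ++ [nd]) μ _ h1 (getElem?_app hx) j hj hlev
    refine ⟨_, hm, hx, j, hj, hlev, e, ?_⟩
    unfold aAt
    rw [e]
    unfold tagAt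
    rw [if_neg (by omega), getElem?_app hx]; rfl
  -- a star yields a frustrated path
  have star : ∀ μ t, 1 ≤ μ → μ < l0.length + 1 → aAt ℓ g (l0 ++ [nd]) μ = some (Sum.inr t) →
      FrP (levelOf ℓ g (l0 ++ [nd])) (DupAt a (l0 ++ [nd])) μ := by
    intro μ t h1 h2 ht
    obtain ⟨x, hx, gx, j, hj, lx, ex, ax⟩ := get μ h1 h2
    rw [ax] at ht
    obtain ⟨q, q', nq, nq', c1, c2, c3, c4, c5, c6, c7, c8⟩ := hS _ x j t gx lx ht
    have eq1 := levelOf_eq ℓ g (l0 ++ [nd]) (q + 1) nq (by omega)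
      (getElem?_app c3) j hj c5
    have eq2 := levelOf_eq ℓ g (l0 ++ [nd]) (q' + 1) nq' (by omega)
      (getElem?_app c4) j hj c6
    have low : ∀ ρ, q + 1 < ρ → ρ ≤ μ → levelOf ℓ g (l0 ++ [nd]) ρ ≤ j := by
      intro ρ r1 r2
      obtain ⟨z, hz, gz, k, hk, lz, ez, az⟩ := get ρ (by omega) (by omega)
      obtain ⟨k', hk', lz'⟩ := c8 (ρ - 1) z (by omega) (by omega) gz
      rw [ez, isLev_unique lz lz']; exact hk'
    refine ⟨q + 1, q' + 1, by omega, by omega, ⟨by omega, ?_⟩, ⟨by omega, ?_⟩, by rw [eq1, ex],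
      by rw [eq2, ex], ?_⟩
    · intro ρ r1 r2; rw [eq1]; exact low ρ r1 r2
    · intro ρ r1 r2; rw [eq2]; exact low ρ (by omega) r2
    · exact ⟨nq.vtx, nq'.vtx, vtxAt_of _ _ _ (by omega) (getElem?_app c3),
        vtxAt_of _ _ _ (by omega) (getElem?_app c4), c7⟩
  obtain ⟨x, hx, gx, j, hj, lx, ex, ax⟩ := get γ hγ hγN
  obtain ⟨z, hz, gz, k, hk, lz, ez, az⟩ := get δ hδ hδN
  obtain ⟨y, hy, -⟩ := lx.2.1
  cases y with
  | inl v =>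
    left
    refine ⟨x.vtx, z.vtx, vtxAt_of _ _ _ hγ (getElem?_app gx),
      vtxAt_of _ _ _ hδ (getElem?_app gz), ?_⟩
    rw [hB x hx j v lx hy, hB z hz k v lz (by rw [← az, ← ha, ax, hy])]
  | inr t =>
    right
    exact ⟨star γ t hγ hγN (by rw [ax, hy]), star δ t hδ hδN (by rw [← ha, ax, hy])⟩

/-- Lemma 5.12: structure of bad cases for the extended walk. -/
theorem statement_10 (ℓ m n : ℕ) (hℓ : 0 < ℓ) (hm : 0 < m) (hn : 0 < n)
    (a : Fin n → Fin m) (g : ℕ → Dom m → Bool) (r : ℕ → Dom m → Fin n) (s : Fin n)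
    (w : List (Node m n)) (hw : extWalk a g r ℓ s = some w)
    (hdup : ∃ α β x y, 1 ≤ α ∧ α ≤ w.length ∧ 1 ≤ β ∧ β ≤ w.length ∧ α ≠ β ∧
      vtxAt w α = some x ∧ vtxAt w β = some y ∧ a x = a y) :
    ∀ φ, 1 ≤ φ → φ ≤ w.length →
      ∃ α β x y, 1 ≤ α ∧ α ≤ w.length ∧ 1 ≤ β ∧ β ≤ w.length ∧ α ≠ β ∧
        vtxAt w α = some x ∧ vtxAt w β = some y ∧ a x = a y ∧
        ¬ Collision (levelOf ℓ g w) (aAt ℓ g w) (φ - 1) (α - 1) ∧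
        ¬ Collision (levelOf ℓ g w) (aAt ℓ g w) (φ - 1) (β - 1) ∧
        ¬ Collision (levelOf ℓ g w) (aAt ℓ g w) (α - 1) (β - 1) := by
  obtain ⟨α, β, x, y, hα, hαN, hβ, hβN, hne, hx, hy, hxy⟩ := hdup
  intro φ hφ hφN
  have hok : WalkOK a g ℓ w := by
    unfold extWalk at hw
    split_ifs at hw with h
    exact walk_ok a g r ℓ _ s w hw
  obtain ⟨α', β', b1, b2, b3, b4, b5, ⟨x', y', e1, e2, e3⟩, b6⟩ :=
    comb (levelOf ℓ g w) (aAt ℓ g w) w.length (DupAt a w)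
      (fun μ => (levelOf_bounds ℓ g w μ).1)
      (fun μ => by rw [levelOf_zero]; exact (levelOf_bounds ℓ g w μ).2)
      (fun γ δ h1 h2 h3 h4 _ h6 h7 => coll_cases ℓ a g w hok γ δ h1 h2 h3 h4 h6 h7)
      φ hφ hφN _ α β hα hαN hβ hβN hne ⟨x, y, hx, hy, hxy⟩ rfl
  exact ⟨α', β', x', y', b1, b2, b3, b4, b5, e1, e2, e3, b6⟩

end EDW
end
end

section
/- Let n be sufficiently large, let ℓ be an integer with 2 ≤ ℓ < log₂ n, and let τ = 20·log₂ n·log₂ log₂ n. Then Σ_{(k¹,k²) ∈ (K^short)², k¹ ≠ k²} ∏_{i=1}^ℓ 2^{−K_i} ≥ 2^{2ℓ−1}, where for each pair (k¹, k²) the quantity K_i denotes the number of distinct level-i indices in P^{k¹} ∪ P^{k²}. -/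
open MeasureTheory
open scoped Classical ENNReal

noncomputable section

namespace EDW

variable {m n : ℕ}

theorem level_shape (ℓ i : ℕ) (hi : 1 ≤ i) (hil : i ≤ ℓ) (k : ℕ → ℕ) (hk : Canon ℓ k)
    (k' : ℕ → ℕ) (hc : Canon ℓ k') (hl : IsLevelIdx ℓ i k') (hp : InP ℓ k' k) :
    1 ≤ k' i ∧ k' i ≤ k i ∧ k' = truncIdx k i (k' i) := by
  obtain ⟨hpos, hz⟩ := hl
  have main : k' i ≤ k i ∧ ∀ t, i < t → t ≤ ℓ → k' t = k t := by
    rcases hp with he | ⟨-, j, hj1, hj2, hj3, hj4, hj5, hj6⟩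
    · exact ⟨(he i hi hil).le, fun t h1 h2 => he t (by omega) h2⟩
    · have hij : i = j := by
        rcases lt_trichotomy i j with h | h | h
        · have := hj6 i hi h
          omega
        · exact h
        · have := hz j hj1 h
          omega
      subst hij
      exact ⟨hj5, hj3⟩
  refine ⟨hpos, main.1, ?_⟩
  funext t
  unfold truncIdx
  split_ifs with h1 h2
  · rw [h1]
  · by_cases h3 : t ≤ ℓ
    · exact main.2 t h2 h3
    · rw [hc t (by omega), hk t (by omega)]
  · by_cases h3 : t = 0
    · exact hc t (by omega)
    · exact hz t (by omega) (by omega)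

theorem canon_toIdx (ℓ : ℕ) (k : Fin ℓ → ℕ) : Canon ℓ (toIdx ℓ k) := by
  intro t ht
  unfold toIdx
  rw [dif_neg (by omega)]

theorem Kcount_le_add (ℓ i : ℕ) (hi : 1 ≤ i) (hil : i ≤ ℓ) (k1 k2 : ℕ → ℕ)
    (h1 : Canon ℓ k1) (h2 : Canon ℓ k2) : Kcount ℓ [k1, k2] i ≤ k1 i + k2 i := by
  unfold Kcount
  have hsub : {k' : ℕ → ℕ | Canon ℓ k' ∧ IsLevelIdx ℓ i k' ∧ ∃ k ∈ [k1, k2], InP ℓ k' k} ⊆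
      (((Finset.Icc 1 (k1 i)).image (truncIdx k1 i) ∪
        (Finset.Icc 1 (k2 i)).image (truncIdx k2 i) : Finset (ℕ → ℕ)) : Set (ℕ → ℕ)) := by
    rintro k' ⟨hc, hl, k, hk, hp⟩
    simp only [List.mem_cons, List.not_mem_nil, or_false] at hk
    simp only [Finset.coe_union, Finset.coe_image, Set.mem_union, Set.mem_image,
      Finset.mem_coe, Finset.mem_Icc]
    rcases hk with rfl | rfl
    · obtain ⟨a, b, c⟩ := level_shape ℓ i hi hil k h1 k' hc hl hp
      exact Or.inl ⟨k' i, ⟨a, b⟩, c.symm⟩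
    · obtain ⟨a, b, c⟩ := level_shape ℓ i hi hil k h2 k' hc hl hp
      exact Or.inr ⟨k' i, ⟨a, b⟩, c.symm⟩
  refine (Set.ncard_le_ncard hsub (Finset.finite_toSet _)).trans ?_
  rw [Set.ncard_coe_finset]
  refine (Finset.card_union_le _ _).trans (add_le_add ?_ ?_)
  · exact Finset.card_image_le.trans (by simp)
  · exact Finset.card_image_le.trans (by simp)

theorem Kcount_le_max (ℓ : ℕ) (hi : 1 ≤ ℓ) (k1 k2 : ℕ → ℕ)
    (h1 : Canon ℓ k1) (h2 : Canon ℓ k2) : Kcount ℓ [k1, k2] ℓ ≤ max (k1 ℓ) (k2 ℓ) := by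
  unfold Kcount
  have hsub : {k' : ℕ → ℕ | Canon ℓ k' ∧ IsLevelIdx ℓ ℓ k' ∧ ∃ k ∈ [k1, k2], InP ℓ k' k} ⊆
      (((Finset.Icc 1 (max (k1 ℓ) (k2 ℓ))).image (truncIdx (fun _ => 0) ℓ) :
        Finset (ℕ → ℕ)) : Set (ℕ → ℕ)) := by
    have hz : ∀ k, Canon ℓ k → ∀ j, truncIdx k ℓ j = truncIdx (fun _ => 0) ℓ j := by
      intro k hk j
      funext t
      unfold truncIdx
      split_ifs with a b
      · rfl
      · exact hk t (Or.inr b)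
      · rfl
    rintro k' ⟨hc, hl, k, hk, hp⟩
    simp only [List.mem_cons, List.not_mem_nil, or_false] at hk
    simp only [Finset.coe_image, Set.mem_image, Finset.mem_coe, Finset.mem_Icc]
    rcases hk with rfl | rfl
    · obtain ⟨a, b, c⟩ := level_shape ℓ ℓ hi le_rfl k h1 k' hc hl hp
      exact ⟨k' ℓ, ⟨a, le_max_of_le_left b⟩, by rw [← hz k h1]; exact c.symm⟩
    · obtain ⟨a, b, c⟩ := level_shape ℓ ℓ hi le_rfl k h2 k' hc hl hp
      exact ⟨k' ℓ, ⟨a, le_max_of_le_right b⟩, by rw [← hz k h2]; exact c.symm⟩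
  refine (Set.ncard_le_ncard hsub (Finset.finite_toSet _)).trans ?_
  rw [Set.ncard_coe_finset]
  exact Finset.card_image_le.trans (by simp)

theorem geom_val (T : ℕ) :
    ∑ k ∈ Finset.range (T + 1), ((2 : ℝ) ^ k)⁻¹ = 2 * (1 - ((2 : ℝ) ^ (T + 1))⁻¹) := by
  induction T with
  | zero => norm_num
  | succ T ih =>
    rw [Finset.sum_range_succ, ih]
    have : (2 : ℝ) ^ T ≠ 0 := by positivity
    field_simp
    ring

theorem pair_sum (T : ℕ) :
    ∑ q ∈ Finset.range (T + 1) ×ˢ Finset.range (T + 1), ((2 : ℝ) ^ (q.1 + q.2))⁻¹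
      = 4 * (1 - ((2 : ℝ) ^ (T + 1))⁻¹) ^ 2 := by
  have : (4 : ℝ) * (1 - ((2 : ℝ) ^ (T + 1))⁻¹) ^ 2 =
      (2 * (1 - ((2 : ℝ) ^ (T + 1))⁻¹)) * (2 * (1 - ((2 : ℝ) ^ (T + 1))⁻¹)) := by ring
  rw [this, ← geom_val, Finset.sum_mul_sum, Finset.sum_product]
  simp only [pow_add, mul_inv]

theorem off_sum (T : ℕ) (hT : 4 ≤ T) :
    3 ≤ ∑ q ∈ (Finset.range (T + 1) ×ˢ Finset.range (T + 1)).filter (fun q => q.1 ≠ q.2),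
      ((2 : ℝ) ^ (max q.1 q.2))⁻¹ := by
  have hs : (Finset.range 5 ×ˢ Finset.range 5).filter (fun q : ℕ × ℕ => q.1 ≠ q.2) ⊆
      (Finset.range (T + 1) ×ˢ Finset.range (T + 1)).filter (fun q => q.1 ≠ q.2) := by
    intro q
    simp only [Finset.mem_filter, Finset.mem_product, Finset.mem_range]
    rintro ⟨⟨a, b⟩, c⟩
    exact ⟨⟨by omega, by omega⟩, c⟩
  refine le_trans ?_ (Finset.sum_le_sum_of_subset_of_nonneg hs (fun _ _ _ => by positivity))
  rw [Finset.sum_filter, Finset.sum_product]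
  simp only [Finset.sum_range_succ, Finset.sum_range_zero]
  norm_num

/-- Lemma 6.7: lower bound on the sum of `∏ 2^{-K_i}` over pairs of
distinct short indices. -/
theorem statement_13 :
    ∃ N : ℕ, ∀ n : ℕ, N ≤ n → ∀ ℓ : ℕ, 2 ≤ ℓ → ℓ < Nat.log 2 n → ∀ τ : ℕ,
      τ = 20 * Nat.log 2 n * Nat.log 2 (Nat.log 2 n) →
      (2 : ℝ) ^ (2 * ℓ - 1) ≤
        ∑ p ∈ ((Fintype.piFinset fun _ : Fin ℓ => Finset.range (τ / 4 + 1)) ×ˢ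
            Fintype.piFinset fun _ : Fin ℓ => Finset.range (τ / 4 + 1)).filter
            (fun p => p.1 ≠ p.2),
          ∏ i ∈ Finset.Icc 1 ℓ, ((2 : ℝ) ^ Kcount ℓ [toIdx ℓ p.1, toIdx ℓ p.2] i)⁻¹ := by
  refine ⟨0, ?_⟩
  intro n _ ℓ hℓ hlog τ hτ
  have hT : ℓ + 4 ≤ τ / 4 := by
    have h1 : 1 ≤ Nat.log 2 (Nat.log 2 n) := Nat.log_pos (by norm_num) (by omega)
    have h2 : 20 * Nat.log 2 n * 1 ≤ τ := by
      rw [hτ]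
      exact Nat.mul_le_mul_left _ h1
    omega
  clear hτ hlog
  generalize τ / 4 = T at hT
  obtain ⟨L, rfl⟩ : ∃ L, ℓ = L + 1 := ⟨ℓ - 1, by omega⟩
  let t : Fin (L + 1) → Finset (ℕ × ℕ) := fun i =>
    if i = Fin.last L then
      (Finset.range (T + 1) ×ˢ Finset.range (T + 1)).filter (fun q => q.1 ≠ q.2)
    else Finset.range (T + 1) ×ˢ Finset.range (T + 1)
  let f : Fin (L + 1) → ℕ × ℕ → ℝ := fun i q =>
    if i = Fin.last L then ((2 : ℝ) ^ (max q.1 q.2))⁻¹ else ((2 : ℝ) ^ (q.1 + q.2))⁻¹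
  let e : (Fin (L + 1) → ℕ × ℕ) → (Fin (L + 1) → ℕ) × (Fin (L + 1) → ℕ) :=
    fun x => (fun i => (x i).1, fun i => (x i).2)
  have he : Function.Injective e := by
    intro x y h
    funext i
    have ha := congrFun (congrArg Prod.fst h) i
    have hb := congrFun (congrArg Prod.snd h) i
    exact Prod.ext ha hb
  have hsub : (Fintype.piFinset t).image e ⊆
      ((Fintype.piFinset fun _ : Fin (L + 1) => Finset.range (T + 1)) ×ˢ
            Fintype.piFinset fun _ : Fin (L + 1) => Finset.range (T + 1)).filter
            (fun p => p.1 ≠ p.2) := by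
    intro p hp
    obtain ⟨x, hx, rfl⟩ := Finset.mem_image.1 hp
    rw [Fintype.mem_piFinset] at hx
    have hx' : ∀ i, (x i).1 < T + 1 ∧ (x i).2 < T + 1 := by
      intro i
      have := hx i
      simp only [t] at this
      split_ifs at this
      · simpa using (Finset.mem_filter.1 this).1
      · simpa using this
    have hl : (x (Fin.last L)).1 ≠ (x (Fin.last L)).2 := by
      have := hx (Fin.last L)
      simp only [t, if_true] at this
      exact (Finset.mem_filter.1 this).2
    simp only [Finset.mem_filter, Finset.mem_product, Fintype.mem_piFinset, Finset.mem_range]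
    refine ⟨⟨fun i => (hx' i).1, fun i => (hx' i).2⟩, fun h => hl (congrFun h (Fin.last L))⟩
  refine le_trans ?_ (Finset.sum_le_sum_of_subset_of_nonneg hsub
    (fun _ _ _ => Finset.prod_nonneg fun _ _ => by positivity))
  rw [Finset.sum_image (fun x _ y _ h => he h)]
  have hterm : ∀ x ∈ Fintype.piFinset t, ∏ i, f i (x i) ≤
      ∏ i ∈ Finset.Icc 1 (L + 1),
        ((2 : ℝ) ^ Kcount (L + 1) [toIdx (L + 1) (e x).1, toIdx (L + 1) (e x).2] i)⁻¹ := by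
    intro x _
    have hIcc : Finset.Icc 1 (L + 1) = Finset.Ico 1 (L + 2) := by
      ext j
      simp only [Finset.mem_Icc, Finset.mem_Ico]
      omega
    rw [hIcc, Finset.prod_Ico_eq_prod_range, show L + 2 - 1 = L + 1 by omega,
      Finset.prod_range]
    refine Finset.prod_le_prod (fun i _ => ?_) (fun i _ => ?_)
    · simp only [f]
      split_ifs <;> positivity
    · have hv : ∀ k : Fin (L + 1) → ℕ, toIdx (L + 1) k (1 + (i : ℕ)) = k i := by
        intro k
        unfold toIdx
        rw [dif_pos (by omega)]
        congr 1
        ext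
        simp
      simp only [f]
      split_ifs with h
      · have hi : L + 1 = 1 + (i : ℕ) := by
          rw [h, Fin.val_last]
          omega
        have := Kcount_le_max (L + 1) (by omega) _ _ (canon_toIdx (L + 1) (e x).1)
          (canon_toIdx (L + 1) (e x).2)
        have h2 : Kcount (L + 1) [toIdx (L + 1) (e x).1, toIdx (L + 1) (e x).2] (1 + (i : ℕ)) ≤
            max (x i).1 (x i).2 := by
          have hv1 := hv (e x).1
          have hv2 := hv (e x).2
          rw [← hi] at hv1 hv2 ⊢
          rw [hv1, hv2] at this
          exact this
        exact inv_anti₀ (by positivity) (pow_le_pow_right₀ (by norm_num) h2)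
      · have := Kcount_le_add (L + 1) (1 + (i : ℕ)) (by omega) (by omega) _ _
          (canon_toIdx (L + 1) (e x).1) (canon_toIdx (L + 1) (e x).2)
        rw [hv, hv] at this
        exact inv_anti₀ (by positivity) (pow_le_pow_right₀ (by norm_num) this)
  refine le_trans ?_ (Finset.sum_le_sum hterm)
  rw [← Finset.prod_univ_sum t f, Fin.prod_univ_castSucc]
  have hc : ∀ i : Fin L, ∑ j ∈ t i.castSucc, f i.castSucc j =
      4 * (1 - ((2 : ℝ) ^ (T + 1))⁻¹) ^ 2 := by
    intro i
    have hne : i.castSucc ≠ Fin.last L := Fin.castSucc_ne_last i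
    simp only [t, f, if_neg hne]
    exact pair_sum T
  have hlast : 3 ≤ ∑ j ∈ t (Fin.last L), f (Fin.last L) j := by
    simp only [t, f, if_true]
    exact off_sum T (by omega)
  rw [Finset.prod_congr rfl (fun i _ => hc i), Finset.prod_const, Finset.card_univ,
    Fintype.card_fin, mul_pow, ← pow_mul]
  have hpowT : (4 : ℝ) * L * 2 ≤ 2 ^ (T + 1) := by
    have h1 : (L : ℝ) ≤ 2 ^ L := by exact_mod_cast (Nat.lt_two_pow_self (n := L)).le
    have h2 : (2 : ℝ) ^ (L + 3) ≤ 2 ^ (T + 1) :=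
      pow_le_pow_right₀ (by norm_num) (by omega)
    rw [pow_add] at h2
    linarith
  have hge1 : (1 : ℝ) ≤ 2 ^ (T + 1) := one_le_pow₀ (by norm_num)
  have hbern : (3 / 4 : ℝ) ≤ (1 - ((2 : ℝ) ^ (T + 1))⁻¹) ^ (2 * L) := by
    have hb := one_add_mul_le_pow (a := -((2 : ℝ) ^ (T + 1))⁻¹)
      (by have := inv_le_one_of_one_le₀ hge1; linarith) (2 * L)
    rw [← sub_eq_add_neg] at hb
    refine le_trans ?_ hb
    push_cast
    have : (2 * (L : ℝ)) * ((2 : ℝ) ^ (T + 1))⁻¹ ≤ 1 / 4 := by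
      rw [← div_eq_mul_inv, div_le_iff₀ (by positivity)]
      linarith
    linarith
  have h4 : (2 : ℝ) ^ (2 * (L + 1) - 1) = 4 ^ L * 2 := by
    rw [show 2 * (L + 1) - 1 = 2 * L + 1 by omega, pow_succ, pow_mul]
    norm_num
  rw [h4, mul_assoc]
  refine mul_le_mul_of_nonneg_left ?_ (by positivity)
  nlinarith

end EDW
end
end

section
/- Fix k¹ < k² in ℕ^ℓ. For every outcome of the relaxed extended walk w^{k¹,k²} and its dependency tree T in which both μ^{k¹} and μ^{k²} exist, there is no collision between the paths p(μ^{k¹}) and p(μ^{k²}). -/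
open MeasureTheory
open scoped Classical ENNReal

noncomputable section

namespace EDW

variable {m n : ℕ}

/-! ### Proof of Lemma 6.2 -/

/-- The level of a single node record. -/
def ndLev (ℓ : ℕ) (g : ℕ → Dom m → Bool) (nd : Node m n) : ℕ :=
  if h : ∃ i, (1 ≤ i ∧ i ≤ ℓ) ∧ ∃ y, nd.tag i = some y ∧ g i y = true then Nat.find h
  else ℓ + 1

theorem ndLev_eq {ℓ : ℕ} {g : ℕ → Dom m → Bool} {nd : Node m n} {i : ℕ} {y : Dom m}
    (h1 : 1 ≤ i) (h2 : i ≤ ℓ) (ht : nd.tag i = some y) (hg : g i y = true)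
    (hlow : ∀ t, 1 ≤ t → t < i → ∀ y', nd.tag t = some y' → g t y' = false) :
    ndLev ℓ g nd = i := by
  unfold ndLev
  have hex : ∃ i, (1 ≤ i ∧ i ≤ ℓ) ∧ ∃ y, nd.tag i = some y ∧ g i y = true :=
    ⟨i, ⟨h1, h2⟩, y, ht, hg⟩
  rw [dif_pos hex, Nat.find_eq_iff]
  refine ⟨⟨⟨h1, h2⟩, y, ht, hg⟩, ?_⟩
  rintro t hti ⟨⟨ht1, _⟩, y', hy', hgy'⟩
  have := hlow t ht1 hti y' hy'
  simp [this] at hgy'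

theorem ndLev_top {ℓ : ℕ} {g : ℕ → Dom m → Bool} {nd : Node m n}
    (hlow : ∀ t, 1 ≤ t → t ≤ ℓ → ∀ y', nd.tag t = some y' → g t y' = false) :
    ndLev ℓ g nd = ℓ + 1 := by
  unfold ndLev
  rw [dif_neg]
  rintro ⟨t, ⟨ht1, ht2⟩, y', hy', hgy'⟩
  have := hlow t ht1 ht2 y' hy'
  simp [this] at hgy'

theorem ndLev_pos (ℓ : ℕ) (g : ℕ → Dom m → Bool) (nd : Node m n) : 1 ≤ ndLev ℓ g nd := by
  unfold ndLev
  split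
  · rename_i h
    exact (Nat.find_spec h).1.1
  · omega

/-- Update of the index vector when passing to a node of level `lam`. -/
def stepC (c : ℕ → ℕ) (lam : ℕ) : ℕ → ℕ :=
  fun t => if t < lam then 0 else if t = lam then c t + 1 else c t

/-- The index vector after processing the list `w`. -/
def stepAll (ℓ : ℕ) (g : ℕ → Dom m → Bool) : (ℕ → ℕ) → List (Node m n) → (ℕ → ℕ)
  | c, [] => c
  | c, x :: xs => stepAll ℓ g (stepC c (ndLev ℓ g x)) xs

/-- Every node of the list satisfies `Q` together with its index vector. -/
def AllQ (ℓ : ℕ) (g : ℕ → Dom m → Bool) (Q : (ℕ → ℕ) → Node m n → Prop) :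
    (ℕ → ℕ) → List (Node m n) → Prop
  | _, [] => True
  | c, x :: xs => Q (stepC c (ndLev ℓ g x)) x ∧ AllQ ℓ g Q (stepC c (ndLev ℓ g x)) xs

theorem stepAll_append (ℓ : ℕ) (g : ℕ → Dom m → Bool) (u v : List (Node m n)) (c : ℕ → ℕ) :
    stepAll ℓ g c (u ++ v) = stepAll ℓ g (stepAll ℓ g c u) v := by
  induction u generalizing c with
  | nil => rfl
  | cons x xs ih => simp [stepAll, ih]

theorem allQ_append (ℓ : ℕ) (g : ℕ → Dom m → Bool) (Q : (ℕ → ℕ) → Node m n → Prop)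
    (u v : List (Node m n)) (c : ℕ → ℕ) :
    AllQ ℓ g Q c (u ++ v) ↔ AllQ ℓ g Q c u ∧ AllQ ℓ g Q (stepAll ℓ g c u) v := by
  induction u generalizing c with
  | nil => simp [AllQ, stepAll]
  | cons x xs ih => simp [AllQ, stepAll, ih, and_assoc]

theorem allQ_mono {ℓ : ℕ} {g : ℕ → Dom m → Bool} {Q Q' : (ℕ → ℕ) → Node m n → Prop}
    {u : List (Node m n)} {c : ℕ → ℕ} (h : AllQ ℓ g Q c u)
    (hQ : ∀ c z, z ∈ u → Q c z → Q' c z) : AllQ ℓ g Q' c u := by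
  induction u generalizing c with
  | nil => trivial
  | cons x xs ih =>
    exact ⟨hQ _ _ (by simp) h.1, ih h.2 fun c z hz => hQ c z (by simp [hz])⟩

theorem stepAll_high {ℓ : ℕ} {g : ℕ → Dom m → Bool} {u : List (Node m n)} {c : ℕ → ℕ} {i : ℕ}
    (hu : ∀ z ∈ u, ndLev ℓ g z ≤ i) (t : ℕ) (ht : i < t) : stepAll ℓ g c u t = c t := by
  induction u generalizing c with
  | nil => rfl
  | cons x xs ih =>
    have hx := hu x (by simp)
    rw [stepAll, ih fun z hz => hu z (by simp [hz])]
    unfold stepC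
    rw [if_neg (by omega), if_neg (by omega)]

theorem allQ_high {ℓ : ℕ} {g : ℕ → Dom m → Bool} {Q : (ℕ → ℕ) → Node m n → Prop}
    {u : List (Node m n)} {c : ℕ → ℕ} {i : ℕ}
    (hu : ∀ z ∈ u, ndLev ℓ g z ≤ i) (h : AllQ ℓ g Q c u) :
    AllQ ℓ g (fun c' z => Q c' z ∧ ∀ t, i < t → c' t = c t) c u := by
  induction u generalizing c with
  | nil => trivial
  | cons x xs ih =>
    have hx := hu x (by simp)
    have hs : ∀ t, i < t → stepC c (ndLev ℓ g x) t = c t := by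
      intro t ht
      unfold stepC
      rw [if_neg (by omega), if_neg (by omega)]
    refine ⟨⟨h.1, hs⟩, ?_⟩
    refine allQ_mono (ih (fun z hz => hu z (by simp [hz])) h.2) ?_
    rintro c' z - ⟨h1, h2⟩
    exact ⟨h1, fun t ht => by rw [h2 t ht, hs t ht]⟩

theorem allQ_get {ℓ : ℕ} {g : ℕ → Dom m → Bool} {Q : (ℕ → ℕ) → Node m n → Prop}
    {u : List (Node m n)} {c : ℕ → ℕ} (h : AllQ ℓ g Q c u) (p : ℕ) (hp : p < u.length) :
    Q (stepAll ℓ g c (u.take (p + 1))) u[p] := by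
  induction u generalizing c p with
  | nil => simp at hp
  | cons x xs ih =>
    cases p with
    | zero => simpa [stepAll] using h.1
    | succ p =>
      have := ih h.2 p (by simpa using hp)
      simpa [stepAll] using this

/-- The property established for each node, relative to a store. -/
def QP (ℓ : ℕ) (g : ℕ → Dom m → Bool) (k1 k2 : ℕ → ℕ) (st : Store m)
    (c : ℕ → ℕ) (z : Node m n) : Prop :=
  (∃ t, ndLev ℓ g z < t ∧ t ≤ ℓ ∧ k1 t < k2 t) →
    ((∀ t, ndLev ℓ g z < t → t ≤ ℓ → c t = k1 t) → c (ndLev ℓ g z) ≤ k1 (ndLev ℓ g z) →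
      ∃ y, z.tag (ndLev ℓ g z) = some y ∧ y ∈ (st (ndLev ℓ g z)).getD ∅) ∧
    ((∀ t, ndLev ℓ g z < t → t ≤ ℓ → c t = k2 t) → 0 < k2 (ndLev ℓ g z) →
      ∀ y, z.tag (ndLev ℓ g z) = some y → y ∉ (st (ndLev ℓ g z)).getD ∅)

/-- Specification of a (relaxed) call at level `i`. -/
def CallSpec (ℓ : ℕ) (g : ℕ → Dom m → Bool) (k1 k2 : ℕ → ℕ) (i : ℕ) (c : ℕ → ℕ)
    (st : Store m) (w : List (Node m n)) (st' : Store m) : Prop :=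
  ∃ u x, w = u ++ [x] ∧ AllQ ℓ g (QP ℓ g k1 k2 st') c u ∧ (∀ z ∈ u, ndLev ℓ g z ≤ i) ∧
    (∀ t, 1 ≤ t → t ≤ i → ∀ y, x.tag t = some y → g t y = false) ∧
    ((¬ ∀ t, i < t → t ≤ ℓ → c t = k1 t) → st' = st)

/-- The index passed to the sub-call in iteration `j`. -/
def subIdx (i j : ℕ) (kctx : ℕ → ℕ) : ℕ → ℕ :=
  fun t => if t = i then j else if i < t then kctx t else 0

/-- Property of the nodes produced so far in a loop at level `I`. -/
def LQ (ℓ : ℕ) (g : ℕ → Dom m → Bool) (k1 k2 : ℕ → ℕ) (I : ℕ) (kctx : ℕ → ℕ)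
    (C₀ C Crec : Finset (Dom m)) (j : ℕ) (st : Store m) (c : ℕ → ℕ) (z : Node m n) : Prop :=
  (∀ t, I < t → c t = kctx t) ∧
  (ndLev ℓ g z = I → ∃ y, z.tag I = some y ∧ y ∈ C ∧ (c I ≤ k1 I → y ∈ Crec) ∧ y ∉ C₀) ∧
  (ndLev ℓ g z < I → c I < j ∧ QP ℓ g k1 k2 st c z)

theorem freshStar_notMem (C : Finset (Dom m)) : (Sum.inr (freshStar C) : Dom m) ∉ C :=
  Nat.find_spec (freshStar_exists C)

theorem subIdx_step {I j : ℕ} {kctx c : ℕ → ℕ}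
    (hc : ∀ t, I ≤ t → c t = subIdx I j kctx t) :
    stepC c I = subIdx I (j + 1) kctx := by
  funext t
  unfold stepC
  by_cases h1 : t < I
  · rw [if_pos h1]; unfold subIdx; rw [if_neg (by omega), if_neg (by omega)]
  · rw [if_neg h1, hc t (by omega)]
    unfold subIdx
    by_cases h2 : t = I
    · simp [h2]
    · simp [h2]

theorem loop_spec (a : Fin n → Fin m) (g : ℕ → Dom m → Bool) (r : ℕ → Dom m → Fin n)
    (ℓ : ℕ) (k1 k2 : ℕ → ℕ) (hlt : IdxLt ℓ k1 k2)
    (subR : (ℕ → ℕ) → Store m → Fin n → Option (List (Node m n) × Store m))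
    (subU : Fin n → Option (Fin n)) (i : ℕ) (hi : i + 1 ≤ ℓ) (kctx : ℕ → ℕ)
    (hk0 : ∀ t, t ≤ i + 1 → kctx t = 0)
    (hsub : ∀ c st s w st', (∀ t, t ≤ i → c t = 0) → subR c st s = some (w, st') →
      CallSpec ℓ g k1 k2 i c st w st')
    (st0 : Store m) (C₀ : Finset (Dom m))
    (hC₀ : (∀ t, i + 1 < t → t ≤ ℓ → kctx t = k2 t) →
      (∃ t, i + 1 < t ∧ t ≤ ℓ ∧ k1 t < k2 t) → 0 < k2 (i + 1) → C₀ = (st0 (i + 1)).getD ∅)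
    (fuel : ℕ) (C : Finset (Dom m)) (star : Bool) (sj : Fin n) (acc : List (Node m n)) (j : ℕ)
    (Crec : Finset (Dom m)) (st : Store m)
    (hacc1 : stepAll ℓ g kctx acc = subIdx (i + 1) j kctx)
    (hacc2 : AllQ ℓ g (LQ ℓ g k1 k2 (i + 1) kctx C₀ C Crec j st) kctx acc)
    (hacc3 : ∀ z ∈ acc, ndLev ℓ g z ≤ i + 1)
    (hCC : C₀ ⊆ C)
    (hst : (¬ ∀ t, i + 1 < t → t ≤ ℓ → kctx t = k1 t) → st = st0)
    (w : List (Node m n)) (st' : Store m)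
    (hrun : rloopF a g r ℓ k1 k2 subR subU (i + 1) kctx fuel C star sj acc j Crec st
      = some (w, st')) :
    CallSpec ℓ g k1 k2 (i + 1) kctx st0 w st' := by
  induction fuel generalizing C star sj acc j Crec st with
  | zero => simp [rloopF] at hrun
  | succ fuel ih =>
    rw [rloopF] at hrun
    rcases hR : subR (fun t => if t = i + 1 then j else if i + 1 < t then kctx t else 0) st sj
      with _ | ⟨subw, st₁⟩
    · simp [hR] at hrun
    rw [hR] at hrun
    dsimp only at hrun
    have hcall := hsub (subIdx (i + 1) j kctx) st sj subw st₁ (by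
      intro t ht
      unfold subIdx
      rw [if_neg (by omega), if_neg (by omega)]) hR
    obtain ⟨u, x, rfl, hu1, hu2, hx, hst1⟩ := hcall
    rcases hU : subU sj with _ | xv
    · simp [hU] at hrun
    rw [hU] at hrun
    simp only [List.getLast?_append, List.getLast?_singleton, Option.some_or,
      List.dropLast_concat] at hrun
    generalize hy : (if star = false ∧ (Sum.inl (a xv) : Dom m) ∉ C then Sum.inl (a xv)
      else Sum.inr (freshStar C) : Dom m) = y at hrun
    generalize (if star = false ∧ (Sum.inl (a xv) : Dom m) ∉ C then false
      else true : Bool) = star' at hrun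
    have hyC : y ∉ C := by
      rw [← hy]
      split
      · rename_i h; exact h.2
      · exact freshStar_notMem C
    generalize hx' : (⟨x.vtx, fun t => if t = i + 1 then some y else x.tag t⟩ : Node m n) = x'
      at hrun
    have hxtag : x'.tag (i + 1) = some y := by rw [← hx']; simp
    have hxlow : ∀ t, 1 ≤ t → t < i + 1 → ∀ y', x'.tag t = some y' → g t y' = false := by
      intro t h1 h2 y' hy'
      rw [← hx'] at hy'
      have hne : t ≠ i + 1 := by omega
      simp only [hne, if_false] at hy'
      exact hx t h1 (by omega) y' hy'
    have hstk : ∀ st2, (∀ t, t ≠ i + 1 → st2 t = st₁ t) → ∀ (c : ℕ → ℕ) (z : Node m n), ndLev ℓ g z < i + 1 →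
        (∀ t, i + 1 < t → c t = kctx t) → c (i + 1) < j → QP ℓ g k1 k2 st c z →
        QP ℓ g k1 k2 st2 c z := by
      intro st2 h2 c z hz hcs hcj hQ hex
      have e2 : st2 (ndLev ℓ g z) = st₁ (ndLev ℓ g z) := h2 _ (by omega)
      rw [e2]
      obtain ⟨hA, hB⟩ := hQ hex
      constructor
      · intro hc hcl
        have : st₁ = st := by
          apply hst1
          intro hall
          have h3 := hall (i + 1) (by omega) hi
          have h4 := hc (i + 1) hz hi
          simp [subIdx] at h3
          omega
        rw [this]
        exact hA hc hcl
      · intro hc hpos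
        have : st₁ = st := by
          apply hst1
          intro hall
          have h3 := hall (i + 1) (by omega) hi
          have h4 := hc (i + 1) hz hi
          simp [subIdx] at h3
          obtain ⟨i0, hi1, hi2, hi3, hi4⟩ := hlt
          rcases lt_trichotomy i0 (i + 1) with h | h | h
          · have := hi4 (i + 1) h hi
            omega
          · subst h
            omega
          · have h5 := hall i0 (by omega) hi2
            have h6 := hc i0 (by omega) hi2
            have h7 := hcs i0 h
            unfold subIdx at h5
            rw [if_neg (by omega), if_pos h] at h5
            omega
        rw [this]
        exact hB hc hpos
    have hu1' := allQ_high hu2 hu1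
    have hpre1 : ∀ t, i + 1 ≤ t → stepAll ℓ g kctx (acc ++ u) t = subIdx (i + 1) j kctx t := by
      intro t ht
      rw [stepAll_append, hacc1, stepAll_high hu2 t (by omega)]
    have hpre3 : ∀ z ∈ acc ++ u, ndLev ℓ g z ≤ i + 1 := by
      intro z hz
      rcases List.mem_append.1 hz with h | h
      · exact hacc3 z h
      · exact (hu2 z h).trans (by omega)
    have hpre2 : ∀ st2, (∀ t, t ≠ i + 1 → st2 t = st₁ t) →
        AllQ ℓ g (LQ ℓ g k1 k2 (i + 1) kctx C₀ C Crec (j + 1) st2) kctx (acc ++ u) := by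
      intro st2 h2
      rw [allQ_append]
      constructor
      · refine allQ_mono hacc2 ?_
        rintro c z - ⟨q1, q2, q3⟩
        refine ⟨q1, q2, fun hz => ⟨by have := (q3 hz).1; omega, ?_⟩⟩
        exact hstk st2 h2 c z hz q1 (q3 hz).1 (q3 hz).2
      · rw [hacc1]
        refine allQ_mono hu1' ?_
        rintro c z hz ⟨q1, q2⟩
        have hzl := hu2 z hz
        refine ⟨?_, fun h => by omega, fun hz => ⟨?_, ?_⟩⟩
        · intro t ht
          rw [q2 t (by omega)]
          unfold subIdx
          rw [if_neg (by omega), if_pos ht]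
        · rw [q2 (i + 1) (by omega)]
          simp [subIdx]
        · unfold QP
          rw [h2 (ndLev ℓ g z) (by omega)]
          exact q1
    have hst1' : (¬ ∀ t, i + 1 < t → t ≤ ℓ → kctx t = k1 t) → st₁ = st0 := by
      intro hn
      rw [← hst hn]
      apply hst1
      intro hall
      apply hn
      intro t ht htl
      have := hall t (by omega) htl
      unfold subIdx at this
      rwa [if_neg (by omega), if_pos ht] at this
    by_cases hg : g (i + 1) y = true
    · rw [if_pos hg] at hrun
      have hlev : ndLev ℓ g x' = i + 1 := ndLev_eq (by omega) hi hxtag hg hxlow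
      have hstep : stepAll ℓ g kctx (acc ++ u ++ [x']) = subIdx (i + 1) (j + 1) kctx := by
        rw [stepAll_append]
        simp only [stepAll]
        rw [hlev]
        exact subIdx_step hpre1
      refine ih _ _ _ _ _ _ _ hstep ?_ ?_ ?_ hst1' hrun
      · rw [allQ_append]
        constructor
        · refine allQ_mono (hpre2 st₁ fun _ _ => rfl) ?_
          rintro c z - ⟨q1, q2, q3⟩
          refine ⟨q1, fun h => ?_, q3⟩
          obtain ⟨y', p1, p2, p3, p4⟩ := q2 h
          refine ⟨y', p1, Finset.mem_insert_of_mem p2, fun h => ?_, p4⟩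
          split
          · exact Finset.mem_insert_of_mem p2
          · exact p3 h
        · simp only [AllQ, and_true]
          rw [hlev, subIdx_step hpre1]
          refine ⟨?_, fun _ => ⟨y, hxtag, Finset.mem_insert_self _ _, ?_, fun h => hyC (hCC h)⟩,
            fun h => by omega⟩
          · intro t ht
            unfold subIdx
            rw [if_neg (by omega), if_pos ht]
          · intro h
            simp only [subIdx, if_true] at h
            rw [if_pos h]
            exact Finset.mem_insert_self _ _
      · intro z hz
        rcases List.mem_append.1 hz with h | h
        · exact hpre3 z h
        · simp only [List.mem_singleton] at h
          rw [h, hlev]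
      · exact hCC.trans (Finset.subset_insert _ _)
    · rw [if_neg hg] at hrun
      simp only [Option.some.injEq, Prod.mk.injEq] at hrun
      obtain ⟨rfl, hst'⟩ := hrun
      refine ⟨acc ++ u, x', rfl, ?_, hpre3, ?_, ?_⟩
      · have h2 : ∀ t, t ≠ i + 1 → st' t = st₁ t := by
          intro t ht
          rw [← hst']
          split
          · simp [ht]
          · rfl
        refine allQ_mono (hpre2 st' h2) ?_
        rintro c z hz ⟨q1, q2, q3⟩
        rcases lt_or_eq_of_le (hpre3 z hz) with h | h
        · exact (q3 h).2
        · obtain ⟨y', p1, p2, p3, p4⟩ := q2 h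
          unfold QP
          rw [h]
          intro hex
          constructor
          · intro hc hcl
            refine ⟨y', p1, ?_⟩
            rw [← hst', if_pos ⟨fun t ht htl => by rw [← q1 t ht]; exact hc t ht htl, hex⟩]
            simpa using p3 hcl
          · intro hc hpos y'' hy''
            rw [p1] at hy''
            obtain rfl := Option.some.inj hy''
            have hkk : ∀ t, i + 1 < t → t ≤ ℓ → kctx t = k2 t :=
              fun t ht htl => by rw [← q1 t ht]; exact hc t ht htl
            have hne : ¬ ∀ t, i + 1 < t → t ≤ ℓ → kctx t = k1 t := by
              intro hall
              obtain ⟨t, ht1, ht2, ht3⟩ := hex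
              have e1 := hall t ht1 ht2
              have e2 := hkk t ht1 ht2
              omega
            rw [← hst', if_neg (fun h => hne h.1), hst1' hne, ← hC₀ hkk hex hpos]
            exact p4
      · intro t h1 h2 y' hy'
        rcases lt_or_eq_of_le h2 with h | h
        · exact hxlow t h1 h y' hy'
        · subst h
          rw [hxtag] at hy'
          obtain rfl := Option.some.inj hy'
          simpa using hg
      · intro hne
        rw [← hst', if_neg (fun h => hne h.1)]
        exact hst1' hne

theorem walk_spec (a : Fin n → Fin m) (g : ℕ → Dom m → Bool) (r : ℕ → Dom m → Fin n)
    (ℓ : ℕ) (k1 k2 : ℕ → ℕ) (hlt : IdxLt ℓ k1 k2) (i : ℕ) (hi : i ≤ ℓ) :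
    ∀ (fuel : ℕ) (c : ℕ → ℕ) (st : Store m) (s : Fin n) (w : List (Node m n)) (st' : Store m),
      (∀ t, t ≤ i → c t = 0) → rwalkF a g r ℓ k1 k2 fuel i c st s = some (w, st') →
      CallSpec ℓ g k1 k2 i c st w st' := by
  induction i with
  | zero =>
    intro fuel c st s w st' _ h
    rw [rwalkF] at h
    simp only [Option.some.injEq, Prod.mk.injEq] at h
    obtain ⟨rfl, rfl⟩ := h
    exact ⟨[], _, rfl, trivial, by simp, by intros; omega, fun _ => rfl⟩
  | succ i ih =>
    intro fuel c st s w st' hc h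
    cases fuel with
    | zero => simp [rwalkF] at h
    | succ fuel =>
      rw [rwalkF] at h
      refine loop_spec a g r ℓ k1 k2 hlt _ _ i hi c hc ?_ st _ ?_ _ _ _ _ _ _ _ _ ?_ ?_ ?_
        (Finset.Subset.refl _) (fun _ => rfl) w st' h
      · intro c st s w st' hc h
        exact ih (by omega) fuel c st s w st' hc h
      · intro h1 h2 h3
        rw [if_pos ⟨h1, h2, h3⟩]
      · funext t
        simp only [stepAll, subIdx]
        split
        · rename_i h; exact hc t (by omega)
        · split
          · rfl
          · exact hc t (by omega)
      · trivial
      · simp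

/-! Dependency-tree combinatorics -/

theorem onPath_succ (lvl : ℕ → ℕ) (ν μ : ℕ) :
    OnPath lvl ν (μ + 1) ↔ ν = μ + 1 ∨ (OnPath lvl ν μ ∧ lvl (μ + 1) ≤ lvl ν) := by
  unfold OnPath
  constructor
  · rintro ⟨h1, h2⟩
    rcases Nat.lt_or_ge μ ν with h | h
    · left; omega
    · right
      exact ⟨⟨h, fun ρ a b => h2 ρ a (by omega)⟩, h2 (μ + 1) (by omega) le_rfl⟩
  · rintro (rfl | ⟨⟨h1, h2⟩, h3⟩)
    · exact ⟨le_rfl, fun ρ a b => by omega⟩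
    · refine ⟨by omega, fun ρ a b => ?_⟩
      rcases Nat.lt_or_ge μ ρ with h | h
      · obtain rfl : ρ = μ + 1 := by omega
        exact h3
      · exact h2 ρ a h

theorem idxAt_succ (lvl : ℕ → ℕ) (μ t : ℕ) :
    idxAt lvl (μ + 1) t = stepC (idxAt lvl μ) (lvl (μ + 1)) t := by
  unfold stepC
  split
  · rename_i h
    unfold idxAt
    rw [Finset.card_eq_zero, Finset.filter_eq_empty_iff]
    rintro ν hν ⟨h1, h2⟩
    rcases (onPath_succ lvl ν μ).1 h1 with rfl | h3
    · omega
    · omega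
  · rename_i h
    split
    · rename_i h'
      unfold idxAt
      rw [← Finset.card_insert_of_notMem (a := μ + 1)
        (s := (Finset.range (μ + 1)).filter fun ν => OnPath lvl ν μ ∧ lvl ν = t) (by simp)]
      congr 1
      ext ν
      simp only [Finset.mem_filter, Finset.mem_range, Finset.mem_insert, onPath_succ]
      constructor
      · rintro ⟨h1, rfl | h2, h3⟩
        · left; rfl
        · right; exact ⟨by have := h2.1.1; omega, h2.1, h3⟩
      · rintro (rfl | ⟨h1, h2, h3⟩)
        · exact ⟨by omega, Or.inl rfl, h'.symm⟩
        · exact ⟨by omega, Or.inr ⟨h2, by omega⟩, h3⟩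
    · rename_i h'
      unfold idxAt
      congr 1
      ext ν
      simp only [Finset.mem_filter, Finset.mem_range, onPath_succ]
      constructor
      · rintro ⟨h1, rfl | h2, h3⟩
        · omega
        · exact ⟨by have := h2.1.1; omega, h2.1, h3⟩
      · rintro ⟨h1, h2, h3⟩
        exact ⟨by omega, Or.inr ⟨h2, by omega⟩, h3⟩

theorem idxAt_const (lvl : ℕ → ℕ) (ν ρ t : ℕ) (h : ν ≤ ρ)
    (hl : ∀ σ, ν < σ → σ ≤ ρ → lvl σ < t) : idxAt lvl ρ t = idxAt lvl ν t := by
  induction ρ, h using Nat.le_induction with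
  | base => rfl
  | succ ρ hρ ih =>
    have := hl (ρ + 1) (by omega) le_rfl
    rw [idxAt_succ, stepC, if_neg (by omega), if_neg (by omega)]
    exact ih fun σ a b => hl σ a (by omega)

theorem idxAt_mono (lvl : ℕ → ℕ) (ν ρ t : ℕ) (h : ν ≤ ρ)
    (hl : ∀ σ, ν < σ → σ ≤ ρ → lvl σ ≤ t) : idxAt lvl ν t ≤ idxAt lvl ρ t := by
  induction ρ, h using Nat.le_induction with
  | base => rfl
  | succ ρ hρ ih =>
    have := hl (ρ + 1) (by omega) le_rfl
    have h2 := ih fun σ a b => hl σ a (by omega)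
    rw [idxAt_succ, stepC, if_neg (by omega)]
    split <;> omega

theorem idxAt_strict (lvl : ℕ → ℕ) (ν σ ρ : ℕ) (h1 : ν < σ) (h2 : σ ≤ ρ)
    (hl : ∀ τ, ν < τ → τ ≤ ρ → lvl τ ≤ lvl σ) :
    idxAt lvl ν (lvl σ) < idxAt lvl ρ (lvl σ) := by
  obtain ⟨q, rfl⟩ : ∃ q, σ = q + 1 := ⟨σ - 1, by omega⟩
  have e1 := idxAt_mono lvl ν q (lvl (q + 1)) (by omega) fun τ a b => hl τ a (by omega)
  have e2 := idxAt_mono lvl (q + 1) ρ (lvl (q + 1)) h2 fun τ a b => hl τ (by omega) b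
  have e3 := idxAt_succ lvl q (lvl (q + 1))
  simp only [stepC, lt_irrefl, if_false, if_true] at e3
  omega

theorem exists_max_level (lvl : ℕ → ℕ) (ν ρ : ℕ) (h : ν < ρ) :
    ∃ σ, ν < σ ∧ σ ≤ ρ ∧ ∀ τ, ν < τ → τ ≤ ρ → lvl τ ≤ lvl σ := by
  obtain ⟨σ, hσ, hmax⟩ := Finset.exists_max_image (Finset.Ioc ν ρ) lvl ⟨ρ, by simp [h]⟩
  rw [Finset.mem_Ioc] at hσ
  exact ⟨σ, hσ.1, hσ.2, fun τ a b => hmax τ (by simp [a, b])⟩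

theorem tagAt_succ (w : List (Node m n)) (p i : ℕ) (hp : p < w.length) :
    tagAt w (p + 1) i = w[p].tag i := by
  simp [tagAt, hp]

theorem levelOf_succ (ℓ : ℕ) (g : ℕ → Dom m → Bool) (w : List (Node m n)) (p : ℕ)
    (hp : p < w.length) : levelOf ℓ g w (p + 1) = ndLev ℓ g w[p] := by
  unfold levelOf ndLev
  simp only [tagAt_succ w p _ hp]

theorem levelOf_le (ℓ : ℕ) (g : ℕ → Dom m → Bool) (w : List (Node m n)) (μ : ℕ) :
    levelOf ℓ g w μ ≤ ℓ + 1 := by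
  unfold levelOf
  split
  · rename_i h
    have := (Nat.find_spec h).1.2
    omega
  · exact le_rfl

theorem idxAt_stepAll (ℓ : ℕ) (g : ℕ → Dom m → Bool) (w : List (Node m n)) (μ : ℕ)
    (hμ : μ ≤ w.length) (t : ℕ) (ht : t ≤ ℓ) :
    idxAt (levelOf ℓ g w) μ t = stepAll ℓ g (fun _ => 0) (w.take μ) t := by
  induction μ generalizing t with
  | zero =>
    simp only [List.take_zero, stepAll]
    unfold idxAt
    rw [Finset.card_eq_zero, Finset.filter_eq_empty_iff]
    rintro ν hν ⟨-, h⟩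
    simp only [zero_add, Finset.range_one, Finset.mem_singleton] at hν
    rw [hν, levelOf_zero] at h
    omega
  | succ p ih =>
    rw [idxAt_succ, levelOf_succ ℓ g w p (by omega), ← List.take_append_getElem (by omega),
      stepAll_append]
    simp only [stepAll, stepC]
    rw [ih (by omega) t ht]

/-- Lemma 6.2: in the relaxed extended walk there is never a collision
between the paths `p(μ^{k¹})` and `p(μ^{k²})`. -/
theorem statement_14 (ℓ m n : ℕ) (hℓ : 0 < ℓ) (hm : 0 < m) (hn : 0 < n)
    (a : Fin n → Fin m) (k1 k2 : ℕ → ℕ) (hlt : IdxLt ℓ k1 k2)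
    (g : ℕ → Dom m → Bool) (r : ℕ → Dom m → Fin n) (s : Fin n)
    (w : List (Node m n)) (hw : extRWalk a g r ℓ k1 k2 s = some w)
    (μ₁ μ₂ : ℕ) (hμ₁ : HasIdx ℓ (levelOf ℓ g w) w.length μ₁ k1)
    (hμ₂ : HasIdx ℓ (levelOf ℓ g w) w.length μ₂ k2) :
    ¬ Collision (levelOf ℓ g w) (aAt ℓ g w) μ₁ μ₂ := by
  -- the run and its specification
  have hrun : ∃ fuel st', rwalkF a g r ℓ k1 k2 fuel ℓ (fun _ => 0) (fun _ => none) s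
      = some (w, st') := by
    unfold extRWalk at hw
    split at hw
    · rename_i h
      rw [Option.map_eq_some_iff] at hw
      obtain ⟨⟨w', st'⟩, h1, h2⟩ := hw
      dsimp only at h2
      subst h2
      exact ⟨_, _, h1⟩
    · simp at hw
  obtain ⟨fuel, st', hrun⟩ := hrun
  obtain ⟨u, x, hwu, hQ, hul, hxl, -⟩ := walk_spec a g r ℓ k1 k2 hlt ℓ le_rfl fuel _ _ s w st'
    (fun _ _ => rfl) hrun
  have hlen : w.length = u.length + 1 := by simp [hwu]
  have hget : ∀ p (hp : p < u.length), w[p]'(by omega) = u[p] := by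
    intro p hp
    subst hwu
    exact List.getElem_append_left hp
  have hlevlow : ∀ p, p < u.length → levelOf ℓ g w (p + 1) ≤ ℓ := by
    intro p hp
    rw [levelOf_succ ℓ g w p (by omega), hget p hp]
    exact hul _ (List.getElem_mem hp)
  have hlevtop : levelOf ℓ g w w.length = ℓ + 1 := by
    rw [hlen, levelOf_succ ℓ g w u.length (by omega)]
    subst hwu
    simp only [List.getElem_concat_length]
    exact ndLev_top hxl
  have htop : ∀ μ, 0 < μ → μ ≤ w.length → levelOf ℓ g w μ = ℓ + 1 → μ = w.length := by
    intro μ h0 h1 h2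
    by_contra hne
    obtain ⟨p, rfl⟩ : ∃ q, μ = q + 1 := ⟨μ - 1, by omega⟩
    have := hlevlow p (by omega)
    omega
  have hroot : ∀ μ, OnPath (levelOf ℓ g w) 0 μ := fun μ =>
    ⟨Nat.zero_le _, fun ρ _ _ => by rw [levelOf_zero]; exact levelOf_le ℓ g w ρ⟩
  obtain ⟨hμ₁l, hμ₁i⟩ := hμ₁
  obtain ⟨hμ₂l, hμ₂i⟩ := hμ₂
  rintro ⟨α, β, hα1, hα2, hβ2, hβ1, hlv, hav⟩
  have hα0 : α ≠ 0 := fun h => hα2 (h ▸ hroot μ₂)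
  have hβ0 : β ≠ 0 := fun h => hβ1 (h ▸ hroot μ₁)
  have hαl : α ≤ w.length := hα1.1.trans hμ₁l
  have hβl : β ≤ w.length := hβ2.1.trans hμ₂l
  by_cases hcase : levelOf ℓ g w α = ℓ + 1
  · have e1 := htop α (by omega) hαl hcase
    have e2 := htop β (by omega) hβl (hlv ▸ hcase)
    rw [e1, ← e2] at hα2
    exact hα2 hβ2
  have hlα : levelOf ℓ g w α ≤ ℓ := by
    have := levelOf_le ℓ g w α
    omega
  have hαu : α - 1 < u.length := by
    by_contra hh
    have : α = w.length := by omega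
    rw [this] at hcase
    exact hcase hlevtop
  have hβu : β - 1 < u.length := by
    by_contra hh
    have : β = w.length := by omega
    rw [hlv, this] at hcase
    exact hcase hlevtop
  obtain ⟨p, rfl⟩ : ∃ q, α = q + 1 := ⟨α - 1, by omega⟩
  obtain ⟨q, rfl⟩ : ∃ q, β = q + 1 := ⟨β - 1, by omega⟩
  simp only [Nat.add_sub_cancel] at hαu hβu
  set lvl := levelOf ℓ g w with hlvl
  generalize hlam : lvl (p + 1) = lam at *
  have hlevp : ndLev ℓ g u[p] = lam := by
    rw [← hget p hαu, ← levelOf_succ ℓ g w p (by omega), ← hlvl, hlam]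
  have hlevq : ndLev ℓ g u[q] = lam := by
    rw [← hget q hβu, ← levelOf_succ ℓ g w q (by omega), ← hlvl, ← hlv]
  have hlam1 : 1 ≤ lam := hlevp ▸ ndLev_pos ℓ g _
  -- indices of the two nodes
  have hαhi : ∀ t, lam < t → t ≤ ℓ → idxAt lvl (p + 1) t = k1 t := by
    intro t ht htl
    rw [← hμ₁i t (by omega) htl]
    refine (idxAt_const lvl _ _ t hα1.1 fun σ h1 h2 => ?_).symm
    have := hα1.2 σ h1 h2
    omega
  have hαlo : idxAt lvl (p + 1) lam ≤ k1 lam := by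
    rw [← hμ₁i lam hlam1 hlα]
    refine idxAt_mono lvl _ _ lam hα1.1 fun σ h1 h2 => ?_
    have := hα1.2 σ h1 h2
    omega
  have hβhi : ∀ t, lam < t → t ≤ ℓ → idxAt lvl (q + 1) t = k2 t := by
    intro t ht htl
    rw [← hμ₂i t (by omega) htl]
    refine (idxAt_const lvl _ _ t hβ2.1 fun σ h1 h2 => ?_).symm
    have := hβ2.2 σ h1 h2
    omega
  have hβlo : idxAt lvl (q + 1) lam ≤ k2 lam := by
    rw [← hμ₂i lam hlam1 hlα]
    refine idxAt_mono lvl _ _ lam hβ2.1 fun σ h1 h2 => ?_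
    have := hβ2.2 σ h1 h2
    omega
  have hβpos : 0 < idxAt lvl (q + 1) lam := by
    rw [idxAt_succ, ← hlv]
    simp [stepC]
  by_cases hex : ∃ t, lam < t ∧ t ≤ ℓ ∧ k1 t < k2 t
  · -- the two nodes lie in different calls
    have hidx : ∀ z, z < u.length → ∀ t, t ≤ ℓ →
        stepAll ℓ g (fun _ => 0) (u.take (z + 1)) t = idxAt lvl (z + 1) t := by
      intro z hz t ht
      rw [hlvl, idxAt_stepAll ℓ g w (z + 1) (by omega) t ht, hwu,
        List.take_append_of_le_length (by omega)]
    have hA := allQ_get hQ p hαu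
    have hB := allQ_get hQ q hβu
    unfold QP at hA hB
    rw [hlevp] at hA
    rw [hlevq] at hB
    obtain ⟨y, hy1, hy2⟩ := (hA hex).1
      (fun t h1 h2 => by rw [hidx p hαu t h2]; exact hαhi t h1 h2)
      (by rw [hidx p hαu lam hlα]; exact hαlo)
    have hB' := (hB hex).2
      (fun t h1 h2 => by rw [hidx q hβu t h2]; exact hβhi t h1 h2) (by omega)
    refine hB' y ?_ hy2
    unfold aAt at hav
    rw [← hlvl, hlam, ← hlv, tagAt_succ w p _ (by omega), tagAt_succ w q _ (by omega),
      hget p hαu, hget q hβu] at hav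
    rw [← hav, hy1]
  · -- the node `α` also lies on the second path
    obtain ⟨i0, hi1, hi2, hi3, hi4⟩ := hlt
    have hi0 : i0 ≤ lam := by
      by_contra hh
      exact hex ⟨i0, by omega, hi2, hi3⟩
    have hkeq : ∀ t, lam < t → t ≤ ℓ → k1 t = k2 t := fun t h1 h2 => hi4 t (by omega) h2
    have hkle : k1 lam ≤ k2 lam := by
      rcases lt_or_eq_of_le hi0 with h | h
      · exact (hi4 lam h hlα).le
      · rw [← h]; exact hi3.le
    rcases lt_trichotomy (p + 1) μ₂ with h | h | h
    · obtain ⟨σ, hσ1, hσ2, hmax⟩ := exists_max_level lvl _ _ h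
      have hσlam : lam < lvl σ := by
        by_contra hh
        refine hα2 ⟨h.le, fun ρ h1 h2 => ?_⟩
        have := hmax ρ h1 h2
        omega
      have hstrict := idxAt_strict lvl _ σ _ hσ1 hσ2 hmax
      by_cases hσt : lvl σ = ℓ + 1
      · have e1 := htop σ (by omega) (by omega) hσt
        have e2 : μ₂ = u.length + 1 := by omega
        have e3 := hμ₂i i0 hi1 hi2
        have e4 : lvl (u.length + 1) = ℓ + 1 := by rw [← e2, ← hσt]; congr 1; omega
        rw [e2, idxAt_succ, e4, stepC, if_pos (by omega)] at e3
        omega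
      · have hle : lvl σ ≤ ℓ := by
          have := levelOf_le ℓ g w σ
          rw [← hlvl] at this
          omega
        have e1 := hαhi _ hσlam hle
        have e2 := hμ₂i _ (by omega) hle
        have e3 := hkeq _ hσlam hle
        omega
    · exact hα2 ⟨h.le, fun ρ h1 h2 => by omega⟩
    · obtain ⟨σ, hσ1, hσ2, hmax⟩ := exists_max_level lvl _ _ h
      have hstrict := idxAt_strict lvl _ σ _ hσ1 hσ2 hmax
      have hge := hmax (p + 1) h le_rfl
      have hle : lvl σ ≤ ℓ := by
        obtain ⟨z, rfl⟩ : ∃ z, σ = z + 1 := ⟨σ - 1, by omega⟩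
        exact hlevlow z (by omega)
      have e2 := hμ₂i _ (by omega) hle
      rcases lt_or_eq_of_le hge with h' | h'
      · have e1 := hαhi (lvl σ) (by omega) hle
        have e3 := hkeq (lvl σ) (by omega) hle
        omega
      · rw [← h', hlam] at hstrict e2
        omega

end EDW
end
end
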